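/- Let G=(V,E) be an oriented 3-edge-connected graph with ℓ = |E| − |V| ≥ 11, and let f: E → Z/6 be any function. Then there exist at least 2^{√ℓ / log ℓ} flows φ: E → Z/6 with φ(e) ≠ f(e) for every e ∈ E, where log denotes the logarithm base 2. -/

import Mathlib

open scoped Classical

/-- A multigraph with an orientation: each edge `e` has a source `src e` and a target `tgt e`.
Loops and parallel edges are allowed. -/
structure Multigraph (V E : Type) where
  src : E → V
  tgt : E → V

namespace Multigraph

variable {V E : Type}

/-- `u` and `v` are joined by some edge satisfying the predicate `P`. -/
def adjVia (G : Multigraph V E) (P : E → Prop) (u v : V) : Prop :=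
  ∃ e, P e ∧ ((G.src e = u ∧ G.tgt e = v) ∨ (G.src e = v ∧ G.tgt e = u))

/-- `v` is reachable from `u` using only edges satisfying `P`. -/
def Reaches (G : Multigraph V E) (P : E → Prop) : V → V → Prop :=
  Relation.ReflTransGen (G.adjVia P)

/-- The graph is connected when only edges satisfying `P` are kept (all edges deleted
whose predicate fails, all vertices kept). -/
def ConnectedVia (G : Multigraph V E) (P : E → Prop) : Prop :=
  Nonempty V ∧ ∀ u v : V, G.Reaches P u v

def Connected (G : Multigraph V E) : Prop :=
  G.ConnectedVia fun _ => True

/-- `G` is `k`-edge-connected: it is connected and has no edge cut of size less than `k`;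
equivalently, deleting any set of fewer than `k` edges leaves it connected. -/
def EdgeConnected (G : Multigraph V E) (k : ℕ) : Prop :=
  ∀ S : Set E, S.ncard < k → G.ConnectedVia fun e => e ∉ S

/-- The degree of a vertex (loops counted twice). -/
noncomputable def degree (G : Multigraph V E) (v : V) : ℕ :=
  {e | G.src e = v}.ncard + {e | G.tgt e = v}.ncard

/-- Every vertex has degree exactly 3. -/
def Cubic (G : Multigraph V E) : Prop :=
  ∀ v : V, G.degree v = 3

/-- `φ : E → Γ` is a flow: at every vertex, the sum over outgoing edges equals the
sum over incoming edges. -/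
def IsFlow [Fintype E] {Γ : Type} [AddCommGroup Γ] (G : Multigraph V E) (φ : E → Γ) : Prop :=
  ∀ v : V, (∑ e : E, if G.src e = v then φ e else 0) = ∑ e : E, if G.tgt e = v then φ e else 0

/-- The vertex `v` is an endpoint of some edge of `C`. -/
def touches (G : Multigraph V E) (C : Set E) (v : V) : Prop :=
  ∃ e ∈ C, G.src e = v ∨ G.tgt e = v

/-- An edge set `C` is (the edge set of) a cycle: it is nonempty, every vertex it touches
has degree exactly 2 in it, and it is connected. -/
def IsCycle (G : Multigraph V E) (C : Set E) : Prop :=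
  C.Nonempty ∧
  (∀ v : V, G.touches C v →
    ({e ∈ C | G.src e = v}.ncard + {e ∈ C | G.tgt e = v}.ncard = 2)) ∧
  (∀ u v : V, G.touches C u → G.touches C v → G.Reaches (· ∈ C) u v)

/-- `R` is `k`-closed: every cycle with at least one edge outside `R` has at least
`k+1` edges outside `R`. -/
def Closed (G : Multigraph V E) (k : ℕ) (R : Set E) : Prop :=
  ∀ C : Set E, G.IsCycle C → (C \ R).Nonempty → k + 1 ≤ (C \ R).ncard

/-- The `k`-closure `⟨S⟩ₖ` of `S` : the minimal `k`-closed set containing `S`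
(the family of `k`-closed sets is closed under intersections). -/
def kClosure (G : Multigraph V E) (k : ℕ) (S : Set E) : Set E :=
  ⋂₀ {R : Set E | S ⊆ R ∧ G.Closed k R}

/-- `S` is a `k`-base: its `k`-closure is the whole edge set. -/
def IsBase (G : Multigraph V E) (k : ℕ) (S : Set E) : Prop :=
  G.kClosure k S = Set.univ

/-- An edge set `S` is peripheral if `G − S` is connected. -/
def Peripheral (G : Multigraph V E) (S : Set E) : Prop :=
  G.ConnectedVia fun e => e ∉ S

/-- The spanning subgraph `(V, F)` is a forest, i.e. contains no cycle. -/
def IsForest (G : Multigraph V E) (F : Set E) : Prop :=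
  ∀ C : Set E, G.IsCycle C → ¬ C ⊆ F

/-- `vs`, `es` describe a path: distinct vertices `vs 0, …, vs n` and distinct edges
`es 0, …, es (n-1)` where `es i` joins `vs i` and `vs (i+1)`. -/
def IsPath (G : Multigraph V E) {n : ℕ} (vs : Fin (n + 1) → V) (es : Fin n → E) : Prop :=
  Function.Injective vs ∧ Function.Injective es ∧
  ∀ i : Fin n,
    (G.src (es i) = vs i.castSucc ∧ G.tgt (es i) = vs i.succ) ∨
    (G.src (es i) = vs i.succ ∧ G.tgt (es i) = vs i.castSucc)

/-- The edge `e` has `y` as one endpoint and its other endpoint in `X`,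
i.e. `e ∈ E(y, X)`. -/
def joins (G : Multigraph V E) (e : E) (y : V) (X : Set V) : Prop :=
  (G.src e = y ∧ G.tgt e ∈ X) ∨ (G.tgt e = y ∧ G.src e ∈ X)

/-- `W` is the vertex set of a connected component of `G − X`. -/
def IsComponent (G : Multigraph V E) (X W : Set V) : Prop :=
  W.Nonempty ∧ Disjoint W X ∧
  (∀ u ∈ W, ∀ v : V, v ∉ X → G.adjVia (fun _ => True) u v → v ∈ W) ∧
  (∀ u ∈ W, ∀ v ∈ W, G.Reaches (fun e => G.src e ∉ X ∧ G.tgt e ∉ X) u v)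

/-- The subgraph induced on `W`, with only those of its edges satisfying `P` kept,
is connected. -/
def ConnectedOn (G : Multigraph V E) (W : Set V) (P : E → Prop) : Prop :=
  ∀ u ∈ W, ∀ v ∈ W, G.Reaches (fun e => P e ∧ G.src e ∈ W ∧ G.tgt e ∈ W) u v

/-- The subgraph induced on `W` is `k`-edge-connected. -/
def EdgeConnectedOn (G : Multigraph V E) (W : Set V) (k : ℕ) : Prop :=
  ∀ S : Set E, S.ncard < k → G.ConnectedOn W fun e => e ∉ S

/-- Some cycle lies entirely inside the vertex set `X`. -/
def HasCycleIn (G : Multigraph V E) (X : Set V) : Prop :=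
  ∃ C : Set E, G.IsCycle C ∧ ∀ e ∈ C, G.src e ∈ X ∧ G.tgt e ∈ X

/-- The edge cut `E(X, V \ X)`. -/
def cutEdges (G : Multigraph V E) (X : Set V) : Set E :=
  {e | (G.src e ∈ X ∧ G.tgt e ∉ X) ∨ (G.src e ∉ X ∧ G.tgt e ∈ X)}

/-- A cubic graph is cyclically `k`-edge-connected if every edge cut separating two
cycle-containing parts has at least `k` edges. -/
def CyclicallyEdgeConnected (G : Multigraph V E) (k : ℕ) : Prop :=
  ∀ X : Set V, G.HasCycleIn X → G.HasCycleIn Xᶜ → k ≤ (G.cutEdges X).ncard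

/-- `G` is 3-connected: more than 3 vertices, connected, and still connected after
deleting any two vertices. -/
def ThreeConnected [Fintype V] (G : Multigraph V E) : Prop :=
  3 < Fintype.card V ∧ G.Connected ∧
    ∀ u v : V, G.ConnectedOn {w : V | w ≠ u ∧ w ≠ v} fun _ => True

/-- The graph `G − r` obtained by deleting the vertex `r` and all incident edges. -/
def deleteVertex (G : Multigraph V E) (r : V) :
    Multigraph {v : V // v ≠ r} {e : E // G.src e ≠ r ∧ G.tgt e ≠ r} where
  src e := ⟨G.src e.1, e.2.1⟩
  tgt e := ⟨G.tgt e.1, e.2.2⟩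

end Multigraph

namespace Multigraph

section Counting
variable {V E : Type}

/-- The edge `x` has one end in `A` and the other end in `B`. -/
def Btw (G : Multigraph V E) (x : E) (A B : Finset V) : Prop :=
  (G.src x ∈ A ∧ G.tgt x ∈ B) ∨ (G.src x ∈ B ∧ G.tgt x ∈ A)

/-- The number of pairs of an edge and an orientation of it that leads from `A` to `B`. -/
noncomputable def cnt [Fintype E] (G : Multigraph V E) (A B : Finset V) : ℕ :=
  ∑ x, ((if G.src x ∈ A ∧ G.tgt x ∈ B then 1 else 0) +
    (if G.src x ∈ B ∧ G.tgt x ∈ A then 1 else 0))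

/-- The subgraph induced on the nonempty set `A` is connected after deleting the edges in `S`. -/
def ConnOff (G : Multigraph V E) (S : Finset E) (A : Finset V) : Prop :=
  A.Nonempty ∧ ∀ B ⊆ A, B.Nonempty → B ≠ A → ∃ x ∉ S, G.Btw x B (A \ B)

/-- The subgraph induced on the nonempty set `A` is connected. -/
def Conn (G : Multigraph V E) (A : Finset V) : Prop := G.ConnOff ∅ A

/-- The edges with both ends in `A`. -/
noncomputable def inside [Fintype E] (G : Multigraph V E) (A : Finset V) : Finset E :=
  Finset.univ.filter fun x => G.src x ∈ A ∧ G.tgt x ∈ A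

/-- The vertex set of the component of `v` in the subgraph induced on `A`. -/
noncomputable def comp (G : Multigraph V E) (A : Finset V) (v : V) : Finset V :=
  A.filter fun u => ∃ C ⊆ A, G.Conn C ∧ v ∈ C ∧ u ∈ C

variable {G : Multigraph V E}

lemma Btw.symm {x : E} {A B : Finset V} (h : G.Btw x A B) : G.Btw x B A := Or.symm h

lemma Btw.mono {x : E} {A B A' B' : Finset V} (h : G.Btw x A B) (hA : A ⊆ A') (hB : B ⊆ B') :
    G.Btw x A' B' := by
  unfold Btw at *; grind

@[simp] lemma mem_inside [Fintype E] {x : E} {A : Finset V} :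
    x ∈ G.inside A ↔ G.src x ∈ A ∧ G.tgt x ∈ A := by simp [inside]

lemma inside_mono [Fintype E] {A B : Finset V} (h : A ⊆ B) : G.inside A ⊆ G.inside B := by
  intro x hx; simp only [mem_inside] at *; exact ⟨h hx.1, h hx.2⟩

section
variable [Fintype E]

lemma cnt_comm (A B : Finset V) : G.cnt A B = G.cnt B A := by
  unfold cnt; exact Finset.sum_congr rfl fun x _ => add_comm _ _

lemma cnt_union {A B : Finset V} (h : Disjoint A B) (C : Finset V) :
    G.cnt (A ∪ B) C = G.cnt A C + G.cnt B C := by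
  unfold cnt; rw [← Finset.sum_add_distrib]
  refine Finset.sum_congr rfl fun x _ => ?_
  have h1 := fun v (hv : v ∈ A) => Finset.disjoint_left.1 h hv
  have := h1 (G.src x); have := h1 (G.tgt x)
  simp only [Finset.mem_union]
  split_ifs <;> simp_all

lemma cnt_union_right {A B : Finset V} (h : Disjoint A B) (C : Finset V) :
    G.cnt C (A ∪ B) = G.cnt C A + G.cnt C B := by
  rw [cnt_comm, cnt_union h, cnt_comm A, cnt_comm B]

lemma cnt_sdiff {A B : Finset V} (h : A ⊆ B) (C : Finset V) :
    G.cnt B C = G.cnt A C + G.cnt (B \ A) C := by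
  rw [← cnt_union Finset.disjoint_sdiff, Finset.union_sdiff_of_subset h]

lemma cnt_sdiff_right {A B : Finset V} (h : A ⊆ B) (C : Finset V) :
    G.cnt C B = G.cnt C A + G.cnt C (B \ A) := by
  rw [cnt_comm, cnt_sdiff h, cnt_comm A, cnt_comm (B \ A)]

@[simp] lemma cnt_empty (C : Finset V) : G.cnt ∅ C = 0 := by simp [cnt]

lemma cnt_mono {A B A' B' : Finset V} (hA : A ⊆ A') (hB : B ⊆ B') : G.cnt A B ≤ G.cnt A' B' := by
  rw [cnt_sdiff hA, cnt_sdiff_right hB A]; omega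

lemma cnt_pos {A B : Finset V} : 0 < G.cnt A B ↔ ∃ x, G.Btw x A B := by
  unfold cnt Btw
  rw [Finset.sum_pos_iff]
  refine exists_congr fun x => ?_
  simp only [Finset.mem_univ, true_and]
  split_ifs <;> simp_all

lemma cnt_eq_sum (A B : Finset V) : G.cnt A B = ∑ a ∈ A, G.cnt {a} B := by
  induction A using Finset.induction_on with
  | empty => simp
  | insert a s ha ih =>
    rw [Finset.sum_insert ha, ← ih, Finset.insert_eq, cnt_union (by simpa using ha)]

lemma card_le_cnt {A B : Finset V} (h : ∀ a ∈ A, 0 < G.cnt {a} B) : A.card ≤ G.cnt A B := by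
  rw [cnt_eq_sum, Finset.card_eq_sum_ones]
  exact Finset.sum_le_sum h

lemma conn_iff {A : Finset V} : G.Conn A ↔
    A.Nonempty ∧ ∀ B ⊆ A, B.Nonempty → B ≠ A → 0 < G.cnt B (A \ B) := by
  simp [Conn, ConnOff, cnt_pos]

lemma Conn.cnt_pos {A B : Finset V} (h : G.Conn A) (hB : B ⊆ A) (hne : B.Nonempty)
    (hn : B ≠ A) : 0 < G.cnt B (A \ B) := (conn_iff.1 h).2 B hB hne hn
end

variable {S : Finset E} {A B : Finset V}

lemma ConnOff.singleton (S : Finset E) (a : V) : G.ConnOff S {a} := by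
  refine ⟨by simp, fun B hB hne hn => absurd ?_ hn⟩
  exact (Finset.Nonempty.subset_singleton_iff hne).1 hB

lemma ConnOff.of_root {a : V} (ha : a ∈ A)
    (h : ∀ C ⊆ A, a ∈ C → C ≠ A → ∃ x ∉ S, G.Btw x C (A \ C)) : G.ConnOff S A := by
  refine ⟨⟨a, ha⟩, fun B hB hne hn => ?_⟩
  by_cases haB : a ∈ B
  · exact h B hB haB hn
  · obtain ⟨x, hx, hb⟩ := h (A \ B) Finset.sdiff_subset (by simp [ha, haB]) (by grind)
    exact ⟨x, hx, hb.symm.mono (by grind) subset_rfl⟩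

lemma ConnOff.anti {S' : Finset E} (h : G.ConnOff S A)
    (hS : ∀ x ∈ S', G.src x ∈ A → G.tgt x ∈ A → x ∈ S) : G.ConnOff S' A := by
  refine ⟨h.1, fun B hB hne hn => ?_⟩
  obtain ⟨x, hx, hb⟩ := h.2 B hB hne hn
  refine ⟨x, fun h' => hx (hS x h' ?_ ?_), hb⟩ <;> unfold Btw at hb <;> grind

lemma ConnOff.conn (h : G.ConnOff S A) : G.Conn A := h.anti (by simp)

lemma ConnOff.union_of_btw (hA : G.ConnOff S A) (hB : G.ConnOff S B)
    (h : ∃ x ∉ S, G.Btw x A B) : G.ConnOff S (A ∪ B) := by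
  obtain ⟨a, ha⟩ := hA.1
  refine ConnOff.of_root (a := a) (by simp [ha]) fun C hC haC hn => ?_
  by_cases h1 : C ∩ A = A
  · by_cases h2 : (C ∩ B).Nonempty
    · obtain ⟨x, hx, hb⟩ := hB.2 (C ∩ B) (by grind) h2 (by grind)
      exact ⟨x, hx, hb.mono (by grind) (by grind)⟩
    · obtain ⟨x, hx, hb⟩ := h
      rw [Finset.not_nonempty_iff_eq_empty] at h2
      refine ⟨x, hx, hb.mono (by grind) ?_⟩
      intro b hb
      have : b ∉ C ∩ B := by simp [h2]
      grind
  · obtain ⟨x, hx, hb⟩ := hA.2 (C ∩ A) (by grind) ⟨a, by grind⟩ h1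
    exact ⟨x, hx, hb.mono (by grind) (by grind)⟩

lemma ConnOff.union_of_mem (hA : G.ConnOff S A) (hB : G.ConnOff S B) {a : V} (ha : a ∈ A)
    (hb : a ∈ B) : G.ConnOff S (A ∪ B) := by
  refine ConnOff.of_root (a := a) (by simp [ha]) fun C hC haC hn => ?_
  by_cases h1 : C ∩ A = A
  · obtain ⟨x, hx, hb⟩ := hB.2 (C ∩ B) (by grind) ⟨a, by grind⟩ (by grind)
    exact ⟨x, hx, hb.mono (by grind) (by grind)⟩
  · obtain ⟨x, hx, hb⟩ := hA.2 (C ∩ A) (by grind) ⟨a, by grind⟩ h1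
    exact ⟨x, hx, hb.mono (by grind) (by grind)⟩

lemma ConnOff.attach (hA : G.ConnOff S A) (h : ∀ b ∈ B, ∃ x ∉ S, G.Btw x {b} A) :
    G.ConnOff S (A ∪ B) := by
  obtain ⟨a, ha⟩ := hA.1
  refine ConnOff.of_root (a := a) (by simp [ha]) fun C hC haC hn => ?_
  by_cases h1 : C ∩ A = A
  · obtain ⟨b, hb, hbC⟩ : ∃ b ∈ B, b ∉ C := by
      by_contra! h'; exact hn (by grind)
    obtain ⟨x, hx, hb'⟩ := h b hb
    refine ⟨x, hx, hb'.symm.mono (by grind) (by grind)⟩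
  · obtain ⟨x, hx, hb⟩ := hA.2 (C ∩ A) (by grind) ⟨a, by grind⟩ h1
    exact ⟨x, hx, hb.mono (by grind) (by grind)⟩

section
variable [Fintype E]
lemma Conn.union_of_cnt (hA : G.Conn A) (hB : G.Conn B) (h : 0 < G.cnt A B) :
    G.Conn (A ∪ B) := by
  obtain ⟨x, hx⟩ := Multigraph.cnt_pos.1 h
  exact ConnOff.union_of_btw hA hB ⟨x, by simp, hx⟩
end

lemma Conn.union_of_mem (hA : G.Conn A) (hB : G.Conn B) {a : V} (ha : a ∈ A)
    (hb : a ∈ B) : G.Conn (A ∪ B) := ConnOff.union_of_mem hA hB ha hb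

lemma Conn.singleton (a : V) : G.Conn {a} := ConnOff.singleton _ a

lemma comp_subset (A : Finset V) (v : V) : G.comp A v ⊆ A := Finset.filter_subset _ _

lemma mem_comp_self {v : V} (h : v ∈ A) : v ∈ G.comp A v := by
  simp only [comp, Finset.mem_filter]
  exact ⟨h, {v}, by simpa using h, Conn.singleton v, by simp, by simp⟩

lemma comp_conn {v : V} (h : v ∈ A) : G.Conn (G.comp A v) := by
  refine ConnOff.of_root (mem_comp_self h) fun C hC hv hn => ?_
  obtain ⟨u, hu, huC⟩ : ∃ u ∈ G.comp A v, u ∉ C := by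
    by_contra! h'; exact hn (subset_antisymm hC h')
  simp only [comp, Finset.mem_filter] at hu
  obtain ⟨hA, D, hD, hDc, hvD, huD⟩ := hu
  obtain ⟨x, hx, hb⟩ := hDc.2 (C ∩ D) (by grind) ⟨v, by grind⟩ (by grind)
  refine ⟨x, hx, hb.mono (by grind) ?_⟩
  intro y hy
  simp only [comp, Finset.mem_filter, Finset.mem_sdiff, Finset.mem_inter] at hy ⊢
  exact ⟨⟨hD hy.1, D, hD, hDc, hvD, hy.1⟩, by tauto⟩

lemma subset_comp {v u : V} {C : Finset V} (hC : C ⊆ A) (hc : G.Conn C) (hu : u ∈ C)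
    (hu' : u ∈ G.comp A v) : C ⊆ G.comp A v := by
  simp only [comp, Finset.mem_filter] at hu'
  obtain ⟨-, D, hD, hDc, hvD, huD⟩ := hu'
  intro y hy
  simp only [comp, Finset.mem_filter]
  exact ⟨hC hy, C ∪ D, Finset.union_subset hC hD, hc.union_of_mem hDc hu huD, by simp [hvD],
    by simp [hy]⟩

variable [Fintype E]

lemma cnt_comp {v : V} (h : v ∈ A) : G.cnt (G.comp A v) (A \ G.comp A v) = 0 := by
  by_contra h0
  obtain ⟨x, hx⟩ := cnt_pos.1 (Nat.pos_of_ne_zero h0)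
  obtain ⟨u, hu, hux⟩ : ∃ u ∈ A \ G.comp A v, G.Btw x (G.comp A v) {u} := by
    unfold Btw at hx ⊢
    rcases hx with hx | hx
    · exact ⟨_, hx.2, by simp [hx.1]⟩
    · exact ⟨_, hx.1, by simp [hx.2]⟩
  have := (comp_conn h).union_of_cnt (Conn.singleton u) (cnt_pos.2 ⟨x, hux⟩)
  have h2 := subset_comp (v := v) (A := A) (u := v)
    (Finset.union_subset (comp_subset A v) (by simp at hu ⊢; exact hu.1)) this
    (by simp [mem_comp_self h]) (mem_comp_self h)
  have := h2 (show u ∈ _ by simp)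
  grind

lemma Conn.sdiff_comp {Y : Finset V} (hY : G.Conn Y) {w s : V} (hw : w ∈ Y)
    (hs : s ∈ Y.erase w) : G.Conn (Y \ G.comp (Y.erase w) s) := by
  have hsub := comp_subset (G := G) (Y.erase w) s
  refine ConnOff.of_root (a := w) (by grind) fun C hC hwC hn => ?_
  have hne : (Y \ G.comp (Y.erase w) s) \ C ≠ ∅ := by
    rw [Ne, Finset.sdiff_eq_empty_iff_subset]; grind
  have hp := hY.cnt_pos (B := (Y \ G.comp (Y.erase w) s) \ C) (by grind)
    (Finset.nonempty_iff_ne_empty.2 hne) (by grind)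
  have h0 := cnt_comp (G := G) hs
  have : Y \ ((Y \ G.comp (Y.erase w) s) \ C) = C ∪ G.comp (Y.erase w) s := by grind
  rw [this, cnt_union_right (by grind [Finset.disjoint_left])] at hp
  have h1 := cnt_mono (G := G) (A := (Y \ G.comp (Y.erase w) s) \ C)
    (A' := Y.erase w \ G.comp (Y.erase w) s) (by grind) (subset_refl (G.comp (Y.erase w) s))
  rw [cnt_comm (Y.erase w \ _), h0] at h1
  obtain ⟨x, hx⟩ := Multigraph.cnt_pos.1 (show 0 < G.cnt C ((Y \ G.comp (Y.erase w) s) \ C) by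
    rw [cnt_comm]; omega)
  exact ⟨x, by simp, hx⟩

/-- Every component of `Y` minus a vertex `w` is joined to `w`. -/
lemma Conn.cnt_comp_pos {Y : Finset V} (hY : G.Conn Y) {w s : V} (hw : w ∈ Y)
    (hs : s ∈ Y.erase w) : 0 < G.cnt (G.comp (Y.erase w) s) {w} := by
  have hsub := comp_subset (G := G) (Y.erase w) s
  have hp := hY.cnt_pos (B := G.comp (Y.erase w) s) (by grind) ⟨s, mem_comp_self hs⟩ (by grind)
  have h0 := cnt_comp (G := G) hs
  have : Y \ G.comp (Y.erase w) s = {w} ∪ (Y.erase w \ G.comp (Y.erase w) s) := by grind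
  rw [this, cnt_union_right (by grind [Finset.disjoint_left])] at hp
  omega

/-- Removing a vertex with at most one edge to the rest keeps a set connected. -/
lemma Conn.erase_of_leaf {Y : Finset V} (hY : G.Conn Y) {w : V} (hw : w ∈ Y)
    (h : G.cnt {w} (Y.erase w) ≤ 1) (hne : (Y.erase w).Nonempty) : G.Conn (Y.erase w) := by
  obtain ⟨s, hs⟩ := hne
  have hsub := comp_subset (G := G) (Y.erase w) s
  have : G.comp (Y.erase w) s = Y.erase w := by
    by_contra hn
    obtain ⟨t, ht, ht'⟩ : ∃ t ∈ Y.erase w, t ∉ G.comp (Y.erase w) s := by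
      by_contra! h'; exact hn (subset_antisymm hsub h')
    have h1 := hY.cnt_comp_pos hw hs
    have h2 := hY.cnt_comp_pos hw ht
    have hsub2 := comp_subset (G := G) (Y.erase w) t
    have hd : Disjoint (G.comp (Y.erase w) s) (G.comp (Y.erase w) t) := by
      rw [Finset.disjoint_left]
      intro u hu hu'
      exact ht' (subset_comp hsub2 (comp_conn ht) hu' hu (mem_comp_self ht))
    have h3 := cnt_mono (G := G) (Finset.union_subset hsub hsub2) (subset_refl {w})
    rw [cnt_union hd, cnt_comm (Y.erase w)] at h3
    omega
  rw [← this]; exact comp_conn hs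

lemma Conn.two_mul_card_le {A : Finset V} (h : G.Conn A) : 2 * A.card ≤ G.cnt A A + 2 := by
  have key : ∀ k, k + 1 ≤ A.card → ∃ C ⊆ A, C.card = k + 1 ∧ 2 * k ≤ G.cnt C C := by
    intro k
    induction k with
    | zero =>
      intro _
      obtain ⟨a, ha⟩ := h.1
      exact ⟨{a}, by simpa using ha, by simp, by simp⟩
    | succ k ih =>
      intro hk
      obtain ⟨C, hC, hcard, hcnt⟩ := ih (by omega)
      have hp := h.cnt_pos hC (Finset.card_pos.1 (by omega)) (by rintro rfl; omega)
      rw [cnt_comm, cnt_eq_sum, Finset.sum_pos_iff] at hp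
      obtain ⟨a, ha, hpa⟩ := hp
      simp only [Finset.mem_sdiff] at ha
      have hd : Disjoint {a} C := by simpa using ha.2
      refine ⟨{a} ∪ C, by grind, by rw [Finset.card_union_of_disjoint hd]; simp; omega, ?_⟩
      rw [cnt_union hd, cnt_union_right hd, cnt_union_right hd, cnt_comm C {a}]
      omega
  have hpos := h.1.card_pos
  obtain ⟨C, hC, hcard, hcnt⟩ := key (A.card - 1) (by omega)
  have := cnt_mono (G := G) hC hC
  omega

end Counting

section Pieces
variable {V E : Type} [Fintype V] [Fintype E]

/-- A cubic 3-edge-connected graph with at least two vertices. -/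
structure CubicThreeConn (G : Multigraph V E) : Prop where
  deg : ∀ v, G.cnt {v} Finset.univ = 3
  cut : ∀ A : Finset V, A.Nonempty → A ≠ Finset.univ → 3 ≤ G.cnt A Aᶜ
  two : 2 ≤ Fintype.card V

variable {G : Multigraph V E}

lemma CubicThreeConn.card (hG : G.CubicThreeConn) (A : Finset V) :
    G.cnt A Finset.univ = 3 * A.card := by
  rw [cnt_eq_sum, Finset.sum_congr rfl fun v _ => hG.deg v]; simp [mul_comm]

lemma CubicThreeConn.cnt_self (hG : G.CubicThreeConn) (v : V) : G.cnt {v} {v} = 0 := by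
  have h := hG.cut {v} (by simp) (by
    intro h; have := congrArg Finset.card h; have := hG.two; simp at *; omega)
  have h1 := hG.deg v
  rw [cnt_sdiff_right (Finset.subset_univ {v}), ← Finset.compl_eq_univ_sdiff] at h1
  omega

lemma cnt_three_le {A B C D : Finset V} (hAB : Disjoint A B) (hAC : Disjoint A C)
    (hBC : Disjoint B C) : G.cnt D A + G.cnt D B + G.cnt D C ≤ G.cnt D Finset.univ := by
  rw [← cnt_union_right hAB, ← cnt_union_right (Finset.disjoint_union_left.2 ⟨hAC, hBC⟩)]
  exact cnt_mono subset_rfl (Finset.subset_univ _)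

/-- Candidates for the set removed from `D`: connected sets inside `T` with connected complement
in `D` that contain `s` and another element of `B`. -/
def Cand (G : Multigraph V E) (D T B : Finset V) (s : V) (Y : Finset V) : Prop :=
  Y ⊆ T ∧ G.Conn Y ∧ G.Conn (D \ Y) ∧ s ∈ Y ∧ ∃ b ∈ B, b ∈ Y ∧ b ≠ s

lemma conn_sdiff_of_split {D Y C : Finset V} (hYD : Y ⊆ D) (hC : C ⊆ Y)
    (hU : G.Conn (D \ Y)) (hYC : G.Conn (Y \ C)) {w : V} (hw : w ∈ Y \ C)
    (hwU : 0 < G.cnt {w} (D \ Y)) : G.Conn (D \ C) := by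
  have : D \ C = (D \ Y) ∪ (Y \ C) := by grind
  rw [this]
  refine hU.union_of_cnt hYC ?_
  rw [cnt_comm]
  exact lt_of_lt_of_le hwU (cnt_mono (by simpa using hw) subset_rfl)

set_option maxHeartbeats 1000000 in
lemma exists_minimal_cand (hG : G.CubicThreeConn) {D T B Y₀ : Finset V} {s : V}
    (hD : G.Conn D) (hT : T ⊆ D) (hB : ∀ b ∈ B, 0 < G.cnt {b} Dᶜ) (hs : s ∈ B)
    (hb : ∀ K ⊆ T, K.Nonempty → G.cnt K (D \ K) = 1 → s ∈ K ∧ ∃ b ∈ B, b ∈ K ∧ b ≠ s)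
    (hY₀ : G.Cand D T B s Y₀) :
    ∃ Y, G.Cand D T B s Y ∧ ((∀ y ∈ Y, 0 < G.cnt {y} (D \ Y)) ∨
      ∃ K C₁ C₂ : Finset V, K.Nonempty ∧ K ⊆ Y ∧ G.cnt K (D \ K) = 2 ∧ Disjoint K B ∧
        (C₁ ⊆ Y ∧ G.Conn C₁ ∧ G.Conn (D \ C₁) ∧ s ∈ C₁ ∧ K ⊆ C₁ ∧ ∀ b ∈ B, b ∈ C₁ → b = s) ∧
        (C₂ ⊆ Y ∧ G.Conn C₂ ∧ G.Conn (D \ C₂) ∧ s ∉ C₂ ∧ K ⊆ C₂ ∧ ∃ b ∈ B, b ∈ C₂ ∧ b ≠ s)) := by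
  obtain ⟨Y, hY, hmin⟩ := Finset.exists_min_image (Finset.univ.filter (G.Cand D T B s))
    Finset.card ⟨Y₀, by simp [hY₀]⟩
  simp only [Finset.mem_filter, Finset.mem_univ, true_and] at hY hmin
  refine ⟨Y, hY, ?_⟩
  obtain ⟨hYT, hYc, hUc, hsY, b, hbB, hbY, hbs⟩ := hY
  have hYD := hYT.trans hT
  set U := D \ Y with hU
  set N := Y.filter fun y => 0 < G.cnt {y} U with hN
  set C : V → Finset V := fun w => G.comp (Y.erase w) s with hCdef
  have hCsub : ∀ w, C w ⊆ Y.erase w := fun w => comp_subset _ _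
  have hout : ∀ x ∈ B, ∀ w, w = x → 0 < G.cnt {w} Dᶜ := by rintro x hx w rfl; exact hB w hx
  -- minimality
  have hM : ∀ w ∈ N, w ≠ s → ∀ x ∈ B, x ∈ C w → x = s := by
    intro w hw hws x hx hxC
    by_contra hxs
    simp only [hN, Finset.mem_filter] at hw
    have hse : s ∈ Y.erase w := Finset.mem_erase.2 ⟨Ne.symm hws, hsY⟩
    have h1 := hCsub w
    have hcand : G.Cand D T B s (C w) := by
      refine ⟨fun a ha => hYT (Finset.erase_subset _ _ (h1 ha)), comp_conn hse, ?_,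
        mem_comp_self hse, x, hx, hxC, hxs⟩
      exact conn_sdiff_of_split hYD (h1.trans (Finset.erase_subset _ _)) hUc
        (hYc.sdiff_comp hw.1 hse) (w := w) (by grind) hw.2
    have h2 := hmin _ hcand
    have h3 := Finset.card_le_card h1
    rw [Finset.card_erase_of_mem hw.1] at h3
    have := Finset.card_pos.2 ⟨w, hw.1⟩
    omega
  by_cases hall : ∀ y ∈ Y, 0 < G.cnt {y} U
  · exact Or.inl hall
  right
  push Not at hall
  obtain ⟨y, hyY, hy0⟩ := hall
  have hyN : y ∈ Y \ N := by grind
  set K := G.comp (Y \ N) y with hK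
  have hKsub : K ⊆ Y \ N := comp_subset _ _
  have hKc : G.Conn K := comp_conn hyN
  have hyK : y ∈ K := mem_comp_self hyN
  have hKU : G.cnt K U = 0 := by
    rw [cnt_eq_sum, Finset.sum_eq_zero]
    intro z hz
    have := hKsub hz
    grind
  have hKr : G.cnt K ((Y \ N) \ K) = 0 := cnt_comp hyN
  clear_value K
  clear hK
  have hNY : N ⊆ Y := Finset.filter_subset _ _
  have hcut : G.cnt K (D \ K) = ∑ w ∈ N, G.cnt {w} K := by
    have : D \ K = (U ∪ ((Y \ N) \ K)) ∪ N := by grind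
    rw [this, cnt_union_right (by grind [Finset.disjoint_left]),
      cnt_union_right (by grind [Finset.disjoint_left]), hKU, hKr, cnt_comm K N, cnt_eq_sum N]
    omega
  have hKe : ∀ w ∈ N, K ⊆ Y.erase w := by intro w hw; grind
  -- `K` extended by an adjacent set avoiding `w`
  have hext : ∀ w ∈ N, ∀ A ⊆ Y.erase w, G.Conn A → 0 < G.cnt A K → ∀ z ∈ A, ∀ t,
      (z ∈ G.comp (Y.erase w) t → K ⊆ G.comp (Y.erase w) t) ∧
      (y ∈ G.comp (Y.erase w) t → A ⊆ G.comp (Y.erase w) t) := by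
    intro w hw A hA hAc hAK z hz t
    have hc := hAc.union_of_cnt hKc hAK
    have hs' := Finset.union_subset hA (hKe w hw)
    refine ⟨fun h => ?_, fun h => ?_⟩
    · exact Finset.subset_union_right.trans (subset_comp hs' hc (by simp [hz]) h)
    · exact Finset.subset_union_left.trans (subset_comp hs' hc (by simp [hyK]) h)
  have hdich : ∀ w ∈ N, ∀ t, y ∈ G.comp (Y.erase w) t → K ⊆ G.comp (Y.erase w) t :=
    fun w hw t h => subset_comp (hKe w hw) hKc hyK h
  have hle1 : ∀ w ∈ N, G.cnt {w} K ≤ 1 := by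
    intro w hw
    by_contra hlt
    have hw' := hw
    simp only [hN, Finset.mem_filter] at hw'
    have hdeg := hG.deg w
    have hsum : G.cnt {w} K + G.cnt {w} (Y.erase w \ K) + G.cnt {w} U + G.cnt {w} Dᶜ ≤ 3 := by
      rw [← hdeg, ← cnt_sdiff_right (hKe w hw)]
      refine cnt_three_le ?_ ?_ ?_ <;> rw [Finset.disjoint_left] <;> intro z hz <;>
        simp only [hU, Finset.mem_sdiff, Finset.mem_compl, Finset.mem_erase] at hz ⊢ <;>
        have := @hYD z <;> tauto
    have hws : w ≠ s := fun h => by have := hout s hs w h; omega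
    have hwb : w ≠ b := fun h => by have := hout b hbB w h; omega
    have hse : s ∈ Y.erase w := Finset.mem_erase.2 ⟨Ne.symm hws, hsY⟩
    have hKall : ∀ t ∈ Y.erase w, y ∈ G.comp (Y.erase w) t := by
      intro t ht
      by_contra hyt
      have h1 := hYc.cnt_comp_pos hw'.1 ht
      have h2 : Disjoint (G.comp (Y.erase w) t) K := by
        rw [Finset.disjoint_left]
        intro u hu hu'
        exact hyt (subset_comp (hKe w hw) hKc hu' hu hyK)
      have h3 := cnt_mono (G := G) (A := {w}) (A' := {w}) (B := G.comp (Y.erase w) t)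
        (B' := Y.erase w \ K) subset_rfl (by
          have := comp_subset (G := G) (Y.erase w) t
          intro u hu
          exact Finset.mem_sdiff.2 ⟨this hu, Finset.disjoint_left.1 h2 hu⟩)
      rw [cnt_comm] at h1
      omega
    have hbe : b ∈ Y.erase w := Finset.mem_erase.2 ⟨Ne.symm hwb, hbY⟩
    have : b ∈ C w := by
      have h1 := subset_comp (comp_subset _ _) (comp_conn hbe) (hKall b hbe) (hKall s hse)
      exact h1 (mem_comp_self hbe)
    exact hbs (hM w hw hws b hbB this)
  set T₂ : V → Prop := fun w => w = s ∨ y ∉ C w with hT₂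
  have hinsC : ∀ w ∈ N, w ≠ s → G.Conn (C w ∪ {w}) := by
    intro w hw hws
    have hse : s ∈ Y.erase w := Finset.mem_erase.2 ⟨Ne.symm hws, hsY⟩
    exact (comp_conn hse).union_of_cnt (Conn.singleton w) (hYc.cnt_comp_pos (hNY hw) hse)
  have hbnot : ∀ w ∈ N, w ≠ s → b ∉ C w := fun w hw hws h => hbs (hM w hw hws b hbB h)
  have hcont : ∀ w ∈ N, ∀ w' ∈ N, w ≠ w' → 0 < G.cnt {w'} K → y ∈ C w → w' ∈ C w := by
    intro w hw w' hw' hne hpos hyC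
    exact (hext w hw {w'} (by simp [hNY hw', Ne.symm hne]) (Conn.singleton w') hpos w' (by simp) s).2 hyC (by simp)
  -- for a type one vertex, the part of `Y` not reached from `s` can be glued to `K`
  have hglue : ∀ w ∈ N, w ≠ s → 0 < G.cnt {w} K → y ∈ C w → ∀ w' ∈ N, w ≠ w' →
      0 < G.cnt {w'} K → ∀ t, y ∈ G.comp (Y.erase w') t → b ∈ G.comp (Y.erase w') t := by
    intro w hw hws hpos hyC w' hw' hne hpos' t hyt
    have hse : s ∈ Y.erase w := Finset.mem_erase.2 ⟨Ne.symm hws, hsY⟩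
    have h1 := hcont w hw w' hw' hne hpos' hyC
    have h2 := hCsub w
    have hwd : w ∈ Y \ C w := Finset.mem_sdiff.2 ⟨hNY hw, fun h => (Finset.mem_erase.1 (h2 h)).1 rfl⟩
    refine (hext w' hw' (Y \ C w) (Finset.subset_erase.2 ⟨Finset.sdiff_subset, by simp [h1]⟩)
      (hYc.sdiff_comp (hNY hw) hse) ?_ w hwd t).2
      hyt (Finset.mem_sdiff.2 ⟨hbY, hbnot w hw hws⟩)
    exact lt_of_lt_of_le hpos (cnt_mono (Finset.singleton_subset_iff.2 hwd) subset_rfl)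
  have huniq1 : ∀ w ∈ N, ∀ w' ∈ N, 0 < G.cnt {w} K → 0 < G.cnt {w'} K → ¬ T₂ w → ¬ T₂ w' →
      w = w' := by
    intro w hw w' hw' hp hp' h1 h1'
    by_contra hne
    simp only [hT₂, not_or, not_not] at h1 h1'
    exact hbnot w' hw' h1'.1 (hglue w hw h1.1 hp h1.2 w' hw' hne hp' s h1'.2)
  have haux2 : ∀ w ∈ N, ∀ w' ∈ N, w ≠ w' → 0 < G.cnt {w} K → 0 < G.cnt {w'} K → T₂ w → T₂ w' →
      w' ≠ s → False := by
    intro w hw w' hw' hne hp hp' h2 h2' hws'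
    have hse' : s ∈ Y.erase w' := Finset.mem_erase.2 ⟨Ne.symm hws', hsY⟩
    have hyw' : y ∉ C w' := h2'.resolve_left hws'
    have key : w ∈ C w' → False := fun h =>
      hyw' ((hext w' hw' {w} (by simp [hNY hw, hne]) (Conn.singleton w) hp w (by simp) s).1 h hyK)
    by_cases hws : w = s
    · exact key (hws ▸ mem_comp_self hse')
    · have hse : s ∈ Y.erase w := Finset.mem_erase.2 ⟨Ne.symm hws, hsY⟩
      have hyw : y ∉ C w := h2.resolve_left hws
      have hw'C : w' ∉ C w := fun h =>
        hyw ((hext w hw {w'} (by simp [hNY hw', Ne.symm hne]) (Conn.singleton w') hp' w' (by simp) s).1 h hyK)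
      have hsub := hCsub w
      have := subset_comp (A := Y.erase w') (v := s) (u := s) (Finset.subset_erase.2
          ⟨Finset.union_subset (hsub.trans (Finset.erase_subset _ _)) (by simp [hNY hw]),
            by simp [hw'C, Ne.symm hne]⟩)
        (hinsC w hw hws) (by simp [C, mem_comp_self hse]) (mem_comp_self hse')
      exact key (this (by simp))
  have huniq2 : ∀ w ∈ N, ∀ w' ∈ N, 0 < G.cnt {w} K → 0 < G.cnt {w'} K → T₂ w → T₂ w' →
      w = w' := by
    intro w hw w' hw' hp hp' h2 h2'
    by_contra hne
    by_cases hws' : w' = s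
    · exact haux2 w' hw' w hw (Ne.symm hne) hp' hp h2' h2 (hws' ▸ hne)
    · exact haux2 w hw w' hw' hne hp hp' h2 h2' hws'
  set N' := N.filter fun w => 0 < G.cnt {w} K with hN'
  have hcut' : G.cnt K (D \ K) = N'.card := by
    rw [hcut, hN', Finset.card_filter]
    refine Finset.sum_congr rfl fun w hw => ?_
    have := hle1 w hw
    split_ifs <;> omega
  have hc1 : (N'.filter fun w => ¬ T₂ w).card ≤ 1 := by
    rw [Finset.card_le_one]
    intro a ha a' ha'
    simp only [hN', Finset.mem_filter] at ha ha'
    exact huniq1 a ha.1.1 a' ha'.1.1 ha.1.2 ha'.1.2 ha.2 ha'.2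
  have hc2 : (N'.filter T₂).card ≤ 1 := by
    rw [Finset.card_le_one]
    intro a ha a' ha'
    simp only [hN', Finset.mem_filter] at ha ha'
    exact huniq2 a ha.1.1 a' ha'.1.1 ha.1.2 ha'.1.2 ha.2 ha'.2
  have hcsum := Finset.card_filter_add_card_filter_not (s := N') (p := T₂)
  have hKD : K ⊆ D := fun a ha => hYD (Finset.sdiff_subset (hKsub ha))
  have hKT : K ⊆ T := fun a ha => hYT (Finset.sdiff_subset (hKsub ha))
  have hpos : 0 < G.cnt K (D \ K) := by
    refine hD.cnt_pos hKD ⟨y, hyK⟩ ?_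
    rintro h
    obtain ⟨u, hu⟩ := hUc.1
    have hu := Finset.mem_sdiff.1 hu
    exact hu.2 (Finset.sdiff_subset (hKsub (h ▸ hu.1)))
  have hne1 : G.cnt K (D \ K) ≠ 1 := by
    intro h1
    obtain ⟨hsK, x, hxB, hxK, hxs⟩ := hb K hKT ⟨y, hyK⟩ h1
    obtain ⟨w, hw⟩ := Finset.card_pos.1 (hcut' ▸ hpos)
    simp only [hN', Finset.mem_filter] at hw
    have hws : w ≠ s := fun h => (Finset.mem_sdiff.1 (hKsub hsK)).2 (h ▸ hw.1)
    have hse : s ∈ Y.erase w := Finset.mem_erase.2 ⟨Ne.symm hws, hsY⟩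
    exact hxs (hM w hw.1 hws x hxB
      (subset_comp (hKe w hw.1) hKc hsK (mem_comp_self hse) hxK))
  obtain ⟨w₁, hw₁⟩ := Finset.card_pos.1 (show 0 < (N'.filter fun w => ¬ T₂ w).card by omega)
  obtain ⟨w₂, hw₂⟩ := Finset.card_pos.1 (show 0 < (N'.filter T₂).card by omega)
  simp only [hN', Finset.mem_filter] at hw₁ hw₂
  obtain ⟨⟨hw₁N, hw₁p⟩, hw₁T⟩ := hw₁
  obtain ⟨⟨hw₂N, hw₂p⟩, hw₂T⟩ := hw₂
  have hne : w₁ ≠ w₂ := by rintro rfl; exact hw₁T hw₂T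
  simp only [hT₂, not_or, not_not] at hw₁T hw₂T
  have hs₁ : s ∈ Y.erase w₁ := Finset.mem_erase.2 ⟨Ne.symm hw₁T.1, hsY⟩
  have hy₂ : y ∈ Y.erase w₂ := hKe w₂ hw₂N hyK
  have hU₁ : 0 < G.cnt {w₁} U := (Finset.mem_filter.1 hw₁N).2
  have hU₂ : 0 < G.cnt {w₂} U := (Finset.mem_filter.1 hw₂N).2
  have hK₁ : K ⊆ C w₁ := hdich w₁ hw₁N s hw₁T.2
  have hC₁ := hCsub w₁
  have hC₂ := comp_subset (G := G) (Y.erase w₂) y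
  have hsC₂ : s ∉ G.comp (Y.erase w₂) y := by
    intro h
    have hse : s ∈ Y.erase w₂ := hC₂ h
    have := subset_comp (A := Y.erase w₂) (v := s) (u := s) hC₂ (comp_conn hy₂) h
      (mem_comp_self hse) (mem_comp_self hy₂)
    exact hw₂T.elim (Finset.mem_erase.1 hse).1.symm fun h => h this
  have hK₂ : K ⊆ G.comp (Y.erase w₂) y := hdich w₂ hw₂N y (mem_comp_self hy₂)
  have hC₁' := hC₁.trans (Finset.erase_subset _ _)
  have hC₂' := hC₂.trans (Finset.erase_subset _ _)
  have hw₁d : w₁ ∈ Y \ C w₁ :=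
    Finset.mem_sdiff.2 ⟨hNY hw₁N, fun h => (Finset.mem_erase.1 (hC₁ h)).1 rfl⟩
  have hw₂d : w₂ ∈ Y \ G.comp (Y.erase w₂) y :=
    Finset.mem_sdiff.2 ⟨hNY hw₂N, fun h => (Finset.mem_erase.1 (hC₂ h)).1 rfl⟩
  refine ⟨K, C w₁, G.comp (Y.erase w₂) y, ⟨y, hyK⟩, hKsub.trans Finset.sdiff_subset, by omega, ?_,
    ⟨hC₁', comp_conn hs₁, ?_, mem_comp_self hs₁, hK₁,
      fun x hx hxC => hM w₁ hw₁N hw₁T.1 x hx hxC⟩,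
    ⟨hC₂', comp_conn hy₂, ?_, hsC₂, hK₂, b, hbB, ?_, hbs⟩⟩
  · rw [Finset.disjoint_left]
    intro x hxK hxB
    have hxs := hM w₁ hw₁N hw₁T.1 x hxB (hK₁ hxK)
    exact hsC₂ (hK₂ (hxs ▸ hxK))
  · exact conn_sdiff_of_split hYD hC₁' hUc (hYc.sdiff_comp (hNY hw₁N) hs₁) hw₁d hU₁
  · exact conn_sdiff_of_split hYD hC₂' hUc (hYc.sdiff_comp (hNY hw₂N) hy₂) hw₂d hU₂
  · exact hglue w₁ hw₁N hw₁T.1 hw₁p hw₁T.2 w₂ hw₂N hne hw₂p y (mem_comp_self hy₂)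

end Pieces

section Branch
variable {V E : Type} [Fintype E] {G : Multigraph V E}

lemma exists_cnt_pos {A C : Finset V} (h : 0 < G.cnt A C) : ∃ a ∈ A, 0 < G.cnt {a} C := by
  rw [cnt_eq_sum, Finset.sum_pos_iff] at h; exact h

lemma cnt_singleton_le {A C : Finset V} {a : V} (h : a ∈ A) : G.cnt {a} C ≤ G.cnt A C :=
  cnt_mono (by simpa using h) subset_rfl

lemma cnt_pair_le {A C : Finset V} {a b : V} (ha : a ∈ A) (hb : b ∈ A) (h : a ≠ b) :
    G.cnt {a} C + G.cnt {b} C ≤ G.cnt A C := by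
  rw [← cnt_union (by simpa using h)]
  exact cnt_mono (by grind) subset_rfl

lemma cnt_triple_le {A C : Finset V} {a b c : V} (ha : a ∈ A) (hb : b ∈ A) (hc : c ∈ A)
    (hab : a ≠ b) (hac : a ≠ c) (hbc : b ≠ c) :
    G.cnt {a} C + G.cnt {b} C + G.cnt {c} C ≤ G.cnt A C := by
  rw [← cnt_union (by simpa using hab), ← cnt_union (by simp [hac.symm, hbc.symm])]
  exact cnt_mono (by grind) subset_rfl

variable [Fintype V]

lemma cnt_univ_split {Y D : Finset V} (A : Finset V) (h : Y ⊆ D) :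
    G.cnt A Finset.univ = G.cnt A Y + G.cnt A (D \ Y) + G.cnt A Dᶜ := by
  rw [cnt_sdiff_right (Finset.subset_univ D), ← Finset.compl_eq_univ_sdiff, cnt_sdiff_right h]

lemma cnt_compl_split {Y D : Finset V} (A : Finset V) (h : Y ⊆ D) :
    G.cnt A Yᶜ = G.cnt A (D \ Y) + G.cnt A Dᶜ := by
  have : Yᶜ = (D \ Y) ∪ Dᶜ := by grind [Finset.mem_compl]
  rw [this, cnt_union_right]
  rw [Finset.disjoint_left]; grind [Finset.mem_compl]

lemma CubicThreeConn.le_cnt_add (hG : G.CubicThreeConn) {K D : Finset V} (hK : K ⊆ D)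
    (hne : K.Nonempty) (hu : K ≠ Finset.univ) : 3 ≤ G.cnt K (D \ K) + G.cnt K Dᶜ := by
  rw [← cnt_compl_split K hK]; exact hG.cut K hne hu

/-- `Y` can be split off from `D`: both parts are connected, each vertex of `Y` has a neighbour
in the remainder, and at least two edges lead from `Y` to the outside of `D`. -/
structure Valid (G : Multigraph V E) (D Y : Finset V) : Prop where
  sub : Y ⊆ D
  conn : G.Conn Y
  connRest : G.Conn (D \ Y)
  nbr : ∀ y ∈ Y, 0 < G.cnt {y} (D \ Y)
  out : 2 ≤ G.cnt Y Dᶜ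

lemma CubicThreeConn.cnt_out_le (hG : G.CubicThreeConn) {Y D : Finset V} (hY : Y ⊆ D)
    (hc : G.Conn Y) (hn : ∀ y ∈ Y, 0 < G.cnt {y} (D \ Y)) : G.cnt Y Dᶜ ≤ 2 := by
  have h1 := hc.two_mul_card_le
  have h2 := card_le_cnt hn
  have h3 := hG.card Y
  rw [cnt_univ_split Y hY] at h3
  omega

lemma Conn.ne_univ_of_sdiff {D Y K : Finset V} (h : G.Conn (D \ Y)) (hK : K ⊆ Y) :
    K ≠ Finset.univ := by
  rintro rfl
  obtain ⟨u, hu⟩ := h.1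
  exact (Finset.mem_sdiff.1 hu).2 (hK (Finset.mem_univ u))

lemma exists_valid (hG : G.CubicThreeConn) {D T B Y₀ : Finset V} {s : V}
    (hD : G.Conn D) (hT : T ⊆ D) (hB : ∀ b ∈ B, 0 < G.cnt {b} Dᶜ) (hs : s ∈ B)
    (hall : ∀ v ∈ T, 0 < G.cnt {v} Dᶜ → v ∈ B)
    (hb : ∀ K ⊆ T, K.Nonempty → G.cnt K (D \ K) = 1 → s ∈ K ∧ ∃ b ∈ B, b ∈ K ∧ b ≠ s)
    (hY₀ : G.Cand D T B s Y₀) : ∃ Y, G.Cand D T B s Y ∧ G.Valid D Y := by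
  obtain ⟨Y, hY, h⟩ := exists_minimal_cand hG hD hT hB hs hb hY₀
  refine ⟨Y, hY, ?_⟩
  obtain ⟨hYT, hYc, hUc, hsY, b, hbB, hbY, hbs⟩ := hY
  rcases h with h | ⟨K, C₁, C₂, hKne, hKY, hK2, hKB, -⟩
  · refine ⟨hYT.trans hT, hYc, hUc, h, ?_⟩
    have := cnt_pair_le (G := G) (C := Dᶜ) hsY hbY (Ne.symm hbs)
    have := hB s hs
    have := hB b hbB
    omega
  · have h3 := hG.le_cnt_add (hKY.trans (hYT.trans hT)) hKne (hUc.ne_univ_of_sdiff hKY)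
    obtain ⟨v, hv, hv'⟩ := exists_cnt_pos (show 0 < G.cnt K Dᶜ by omega)
    exact absurd (hall v (hYT (hKY hv)) hv') (Finset.disjoint_left.1 hKB hv)

lemma exists_valid_of_two (hG : G.CubicThreeConn) {D W : Finset V} {a b : V}
    (hD : G.Conn D) (hW : W ⊆ D) (hWc : G.Conn W) (hWr : G.Conn (D \ W)) (ha : a ∈ W) (hb : b ∈ W)
    (hab : a ≠ b) (ha' : 0 < G.cnt {a} Dᶜ) (hb' : 0 < G.cnt {b} Dᶜ) (h2 : G.cnt W Dᶜ ≤ 2) :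
    ∃ Q ⊆ W, G.Valid D Q ∧ a ∈ Q ∧ b ∈ Q := by
  have hin : ∀ v ∈ W, 0 < G.cnt {v} Dᶜ → v = a ∨ v = b := by
    intro v hv hv'
    by_contra! h
    have := cnt_triple_le (G := G) (C := Dᶜ) hv ha hb h.1 h.2 hab
    omega
  obtain ⟨Q, hQ, hv⟩ := exists_valid hG (T := W) (B := {a, b}) (s := a) (Y₀ := W) hD hW
    (by simp [ha', hb']) (by simp) (by simpa using hin) (by
      intro K hK hne h1
      have h3 := hG.le_cnt_add (hK.trans hW) hne (hWr.ne_univ_of_sdiff hK)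
      have h4 := cnt_sdiff (G := G) hK Dᶜ
      have key : ∀ v ∈ W, 0 < G.cnt {v} Dᶜ → v ∈ K := by
        intro v hv hv'
        by_contra hvK
        have := cnt_singleton_le (G := G) (A := W \ K) (C := Dᶜ) (a := v) (by simp [hv, hvK])
        omega
      exact ⟨key a ha ha', b, by simp, key b hb hb', Ne.symm hab⟩)
    ⟨subset_rfl, hWc, hWr, ha, b, by simp, hb, Ne.symm hab⟩
  obtain ⟨hQW, -, -, haQ, b', hb'm, hb'Q, hb'a⟩ := hQ
  refine ⟨Q, hQW, hv, haQ, ?_⟩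
  simp only [Finset.mem_insert, Finset.mem_singleton] at hb'm
  rcases hb'm with rfl | rfl
  · exact absurd rfl hb'a
  · exact hb'Q

/-- If no subset of `D` avoiding `d` is attached to the rest of `D` by a bridge, then `D` minus
`d` is connected. -/
lemma conn_erase_of_bridgeless (hG : G.CubicThreeConn) {D : Finset V} {d : V} (hD : G.Conn D)
    (hd : d ∈ D) (hbr : ∀ K ⊆ D.erase d, G.cnt K (D \ K) ≠ 1)
    (hne : (D.erase d).Nonempty) : G.Conn (D.erase d) := by
  have key : ∀ s ∈ D.erase d, 2 ≤ G.cnt (G.comp (D.erase d) s) {d} := by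
    intro s hs
    have hsub := comp_subset (G := G) (D.erase d) s
    have hp := hD.cnt_comp_pos hd hs
    have h1 := hbr _ hsub
    have h2 : G.cnt (G.comp (D.erase d) s) (D \ G.comp (D.erase d) s) =
        G.cnt (G.comp (D.erase d) s) {d} := by
      have : D \ G.comp (D.erase d) s = {d} ∪ (D.erase d \ G.comp (D.erase d) s) := by grind
      rw [this, cnt_union_right (by grind [Finset.disjoint_left]), cnt_comp hs, add_zero]
    omega
  obtain ⟨s, hs⟩ := hne
  have hsub := comp_subset (G := G) (D.erase d) s
  have : G.comp (D.erase d) s = D.erase d := by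
    by_contra hn
    obtain ⟨t, ht, ht'⟩ : ∃ t ∈ D.erase d, t ∉ G.comp (D.erase d) s := by
      by_contra! h'; exact hn (subset_antisymm hsub h')
    have h1 := key s hs
    have h2 := key t ht
    have hsub2 := comp_subset (G := G) (D.erase d) t
    have hdj : Disjoint (G.comp (D.erase d) s) (G.comp (D.erase d) t) := by
      rw [Finset.disjoint_left]
      intro u hu hu'
      exact ht' (subset_comp hsub2 (comp_conn ht) hu' hu (mem_comp_self ht))
    have h3 := cnt_mono (G := G) (Finset.union_subset hsub hsub2) (subset_refl {d})
    rw [cnt_union hdj, cnt_comm (D.erase d)] at h3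
    have h4 := hG.deg d
    have h5 := cnt_mono (G := G) (subset_refl {d}) (Finset.subset_univ (D.erase d))
    omega
  rw [← this]; exact comp_conn hs

lemma exists_two_valid (hG : G.CubicThreeConn) {D : Finset V} {d : V} (hD : G.Conn D)
    (hd : d ∈ D) (hdo : 0 < G.cnt {d} Dᶜ) (hbr : ∀ K ⊆ D.erase d, G.cnt K (D \ K) ≠ 1)
    (h4 : 4 ≤ G.cnt D Dᶜ) :
    ∃ Y Y', Y ⊆ D.erase d ∧ Y' ⊆ D.erase d ∧ G.Valid D Y ∧ G.Valid D Y' ∧ Y ≠ Y' ∧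
      ∃ z, z ∈ Y ∧ z ∈ Y' := by
  set T := D.erase d with hT
  have hTD : T ⊆ D := Finset.erase_subset _ _
  have hDT : D = {d} ∪ T := by grind
  have hDT' : D \ T = {d} := by grind
  have hdj : Disjoint {d} T := by simp [hT]
  have hTne : T.Nonempty := by
    rw [Finset.nonempty_iff_ne_empty]
    intro h0
    rw [h0, Finset.union_empty] at hDT
    have h5 := cnt_mono (G := G) (subset_refl D) (Finset.subset_univ Dᶜ)
    have := hG.deg d
    rw [hDT] at h4 h5
    omega
  have hTc : G.Conn T := conn_erase_of_bridgeless hG hD hd hbr hTne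
  have hdle : G.cnt {d} Dᶜ ≤ 1 := by
    have h5 := hD.cnt_pos hTD hTne (by rintro h; exact Finset.notMem_erase d D (hT.subset (h.symm.subset hd)))
    have h6 := hbr T subset_rfl
    rw [hDT', cnt_comm] at h5 h6
    have h7 := cnt_univ_split (G := G) {d} (Y := T) hTD
    rw [hG.deg] at h7
    omega
  have hle : ∀ v ∈ T, G.cnt {v} Dᶜ ≤ 1 := by
    intro v hv
    have h5 := hD.cnt_pos (B := {v}) (by simpa using hTD hv) (by simp) (by
      rintro h; rw [← h] at hd; simp at hd; subst hd; simp [hT] at hv)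
    have h6 := hbr {v} (by simpa using hv)
    have h7 := cnt_univ_split (G := G) {v} (Y := {v}) (D := D) (by simpa using hTD hv)
    rw [hG.deg] at h7
    omega
  set O := T.filter fun v => 0 < G.cnt {v} Dᶜ with hO
  have hOT : O ⊆ T := Finset.filter_subset _ _
  have hOcard : 3 ≤ O.card := by
    have h5 : G.cnt T Dᶜ = O.card := by
      rw [cnt_eq_sum, hO, Finset.card_filter]
      refine Finset.sum_congr rfl fun v hv => ?_
      have := hle v hv
      split_ifs <;> omega
    rw [hDT, cnt_union hdj, ← hDT] at h4
    omega
  have hOo : ∀ b ∈ O, 0 < G.cnt {b} Dᶜ := fun b hb => (Finset.mem_filter.1 hb).2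
  have hOall : ∀ v ∈ T, 0 < G.cnt {v} Dᶜ → v ∈ O := fun v hv h => Finset.mem_filter.2 ⟨hv, h⟩
  have hvac : ∀ (T' B : Finset V) (s : V), T' ⊆ T → ∀ K ⊆ T', K.Nonempty → G.cnt K (D \ K) = 1 →
      s ∈ K ∧ ∃ b ∈ B, b ∈ K ∧ b ≠ s :=
    fun T' B s hT' K hK _ h => absurd h (hbr K (hK.trans hT'))
  have hd1 : G.Conn (D \ T) := hDT' ▸ Conn.singleton d
  obtain ⟨s, hs, t, ht, hst⟩ := Finset.one_lt_card.1 (show 1 < O.card by omega)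
  obtain ⟨Y₀, hY₀, hv₀⟩ := exists_valid hG hD hTD hOo hs hOall (hvac T O s subset_rfl)
    ⟨subset_rfl, hTc, hd1, hOT hs, t, ht, hOT ht, Ne.symm hst⟩
  obtain ⟨hY₀T, -, -, hsY₀, s', hs'O, hs'Y₀, hs's⟩ := hY₀
  obtain ⟨r, hr, hrs⟩ : ∃ r ∈ O, r ≠ s ∧ r ≠ s' := by
    by_contra! h
    have : O ⊆ {s, s'} := by
      intro v hv
      have := h v hv
      simp only [Finset.mem_insert, Finset.mem_singleton]; tauto
    have := (Finset.card_le_card this).trans Finset.card_le_two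
    omega
  obtain ⟨Y, hY, h⟩ := exists_minimal_cand hG (B := O.erase s') hD hTD
    (fun b hb => hOo b (Finset.mem_of_mem_erase hb)) (Finset.mem_erase.2 ⟨Ne.symm hs's, hs⟩)
    (hvac T _ s subset_rfl)
    ⟨subset_rfl, hTc, hd1, hOT hs, r, Finset.mem_erase.2 ⟨hrs.2, hr⟩, hOT hr, hrs.1⟩
  obtain ⟨hYT, hYc, hUc, hsY, b, hbB, hbY, hbs⟩ := hY
  have hbO := Finset.mem_erase.1 hbB
  rcases h with h | ⟨K, C₁, C₂, hKne, hKY, hK2, hKB, h1, h2⟩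
  · refine ⟨Y₀, Y, hY₀T, hYT, hv₀, ⟨hYT.trans hTD, hYc, hUc, h, ?_⟩, ?_, s, hsY₀, hsY⟩
    · have := cnt_pair_le (G := G) (C := Dᶜ) hsY hbY (Ne.symm hbs)
      have := hOo s hs
      have := hOo b hbO.2
      omega
    · rintro rfl
      have := hG.cnt_out_le hv₀.sub hv₀.conn hv₀.nbr
      have := cnt_triple_le (G := G) (C := Dᶜ) hsY hbY hs'Y₀ (Ne.symm hbs) (Ne.symm hs's) hbO.1
      have := hOo s hs
      have := hOo b hbO.2
      have := hOo s' hs'O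
      omega
  · obtain ⟨hC₁Y, hC₁c, hC₁r, hsC₁, hKC₁, hC₁B⟩ := h1
    obtain ⟨hC₂Y, hC₂c, hC₂r, hsC₂, hKC₂, b', hb'B, hb'C, -⟩ := h2
    have hs'K : s' ∈ K := by
      have h3 := hG.le_cnt_add (hKY.trans (hYT.trans hTD)) hKne (hUc.ne_univ_of_sdiff hKY)
      obtain ⟨v, hv, hv'⟩ := exists_cnt_pos (show 0 < G.cnt K Dᶜ by omega)
      have hvO := hOall v (hYT (hKY hv)) hv'
      by_contra hs'K
      exact Finset.disjoint_left.1 hKB hv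
        (Finset.mem_erase.2 ⟨fun h => hs'K (h ▸ hv), hvO⟩)
    have hC₁T := hC₁Y.trans hYT
    have hC₂T := hC₂Y.trans hYT
    have hb'O := Finset.mem_erase.1 hb'B
    obtain ⟨Y₁, ⟨hY₁C, -, -, hsY₁, b₁, hb₁O, hb₁Y, hb₁s⟩, hv₁⟩ :=
      exists_valid hG (T := C₁) hD (hC₁T.trans hTD) hOo hs (fun v hv h => hOall v (hC₁T hv) h)
        (hvac C₁ O s hC₁T) ⟨subset_rfl, hC₁c, hC₁r, hsC₁, s', hs'O, hKC₁ hs'K, hs's⟩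
    obtain ⟨Y₂, ⟨hY₂C, -, -, hs'Y₂, -⟩, hv₂⟩ :=
      exists_valid hG (T := C₂) hD (hC₂T.trans hTD) hOo hs'O (fun v hv h => hOall v (hC₂T hv) h)
        (hvac C₂ O s' hC₂T) ⟨subset_rfl, hC₂c, hC₂r, hKC₂ hs'K, b', hb'O.2, hb'C, hb'O.1⟩
    have hb₁ : b₁ = s' := by
      by_contra hne
      exact hb₁s (hC₁B b₁ (Finset.mem_erase.2 ⟨hne, hb₁O⟩) (hY₁C hb₁Y))
    refine ⟨Y₁, Y₂, hY₁C.trans hC₁T, hY₂C.trans hC₂T, hv₁, hv₂, ?_, s', hb₁ ▸ hb₁Y, hs'Y₂⟩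
    rintro rfl
    exact hsC₂ (hY₂C hsY₁)

end Branch

section Flows
variable {V E : Type} [Fintype E] {G : Multigraph V E} {Γ : Type} [AddCommGroup Γ]

/-- The net outflow of `φ` at `v`. -/
noncomputable def bd (G : Multigraph V E) (φ : E → Γ) (v : V) : Γ :=
  (∑ e : E, if G.src e = v then φ e else 0) - ∑ e : E, if G.tgt e = v then φ e else 0

lemma isFlow_iff {φ : E → Γ} : G.IsFlow φ ↔ ∀ v, G.bd φ v = 0 := by
  simp [IsFlow, bd, sub_eq_zero]

lemma bd_add (φ ψ : E → Γ) (v : V) : G.bd (φ + ψ) v = G.bd φ v + G.bd ψ v := by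
  have h : ∀ (P : E → Prop), (∑ e, if P e then (φ + ψ) e else 0) =
      (∑ e, if P e then φ e else 0) + ∑ e, if P e then ψ e else 0 := by
    intro P
    rw [← Finset.sum_add_distrib]
    exact Finset.sum_congr rfl fun e _ => by split_ifs <;> simp
  rw [bd, h, h, bd, bd]; abel

lemma bd_zero (v : V) : G.bd (0 : E → Γ) v = 0 := by simp [bd]

lemma bd_single (x : E) (γ : Γ) (v : V) : G.bd (Pi.single x γ) v =
    (if G.src x = v then γ else 0) - (if G.tgt x = v then γ else 0) := by
  have h : ∀ (P : E → Prop), (∑ e, if P e then (Pi.single x γ : E → Γ) e else 0) =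
      if P x then γ else 0 := by
    intro P
    rw [Finset.sum_eq_single x] <;> simp +contextual
  rw [bd, h, h]

lemma isFlow_zero : G.IsFlow (0 : E → Γ) := isFlow_iff.2 bd_zero

lemma IsFlow.add {φ ψ : E → Γ} (hφ : G.IsFlow φ) (hψ : G.IsFlow ψ) : G.IsFlow (φ + ψ) := by
  rw [isFlow_iff] at *; intro v; rw [bd_add, hφ, hψ, add_zero]

lemma IsFlow.neg {φ : E → Γ} (hφ : G.IsFlow φ) : G.IsFlow (-φ) := by
  rw [isFlow_iff] at *
  intro v
  have := bd_add (G := G) φ (-φ) v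
  rw [add_neg_cancel, bd_zero, hφ, zero_add] at this
  exact this.symm

lemma IsFlow.sum {ι : Type*} (s : Finset ι) {φ : ι → E → Γ} (h : ∀ i ∈ s, G.IsFlow (φ i)) :
    G.IsFlow (∑ i ∈ s, φ i) := by
  induction s using Finset.induction_on with
  | empty => simpa using isFlow_zero
  | insert a s ha ih =>
    rw [Finset.sum_insert ha]
    exact (h a (by simp)).add (ih fun i hi => h i (by simp [hi]))

lemma IsFlow.smul {R : Type} [Ring R] {φ : E → R} (hφ : G.IsFlow φ) (c : R) :
    G.IsFlow (fun x => c * φ x) := by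
  intro v
  have := congrArg (c * ·) (hφ v)
  simpa [Finset.mul_sum, mul_ite] using this

/-- A flow that uses only one edge of a cut vanishes on that edge. -/
lemma IsFlow.eq_zero_of_bridge {φ : E → Γ} (hφ : G.IsFlow φ) {X : Finset V} {x : E}
    (hx : ¬ (G.src x ∈ X ↔ G.tgt x ∈ X))
    (h : ∀ y, y ≠ x → φ y ≠ 0 → (G.src y ∈ X ↔ G.tgt y ∈ X)) : φ x = 0 := by
  have h1 : ∑ v ∈ X, G.bd φ v =
      ∑ e, ((if G.src e ∈ X then φ e else 0) - if G.tgt e ∈ X then φ e else 0) := by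
    simp only [bd, Finset.sum_sub_distrib]
    congr 1 <;> (rw [Finset.sum_comm]; exact Finset.sum_congr rfl fun e _ => by simp)
  rw [Finset.sum_eq_zero fun v _ => isFlow_iff.1 hφ v, Finset.sum_eq_single x] at h1
  · by_cases hs : G.src x ∈ X <;> by_cases ht : G.tgt x ∈ X
    · exact absurd (by simp [hs, ht]) hx
    · rw [if_pos hs, if_neg ht, sub_zero] at h1; exact h1.symm
    · rw [if_neg hs, if_pos ht, zero_sub] at h1; exact neg_eq_zero.1 h1.symm
    · exact absurd (by simp [hs, ht]) hx
  · intro y _ hy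
    by_cases h0 : φ y = 0
    · simp [h0]
    · have := h y hy h0
      simp [this]
  · simp

/-- The support of `φ` is contained in `T`. -/
def SuppIn (φ : E → Γ) (T : Finset E) : Prop := ∀ x, x ∉ T → φ x = 0

lemma ConnOff.exists_path {S : Finset E} {A : Finset V} (h : G.ConnOff S A) {u v : V}
    (hu : u ∈ A) (hv : v ∈ A) (γ : Γ) : ∃ p : E → Γ, SuppIn p (G.inside A \ S) ∧
      ∀ w, G.bd p w = (if u = w then γ else 0) - if v = w then γ else 0 := by
  set C := A.filter fun u => ∃ p : E → Γ, SuppIn p (G.inside A \ S) ∧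
      ∀ w, G.bd p w = (if u = w then γ else 0) - if v = w then γ else 0 with hC
  have hvC : v ∈ C := by
    simp only [hC, Finset.mem_filter]
    exact ⟨hv, 0, fun _ _ => rfl, fun w => by simp [bd_zero]⟩
  have hCA : C = A := by
    by_contra hn
    obtain ⟨x, hx, hb⟩ := h.2 C (Finset.filter_subset _ _) ⟨v, hvC⟩ hn
    have hmem : ∀ u w, u ∈ C → w ∈ A \ C → (G.src x = u ∧ G.tgt x = w ∨ G.src x = w ∧ G.tgt x = u) →
        False := by
      intro u w hu hw hxe
      rw [Finset.mem_sdiff] at hw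
      refine hw.2 ?_
      have hu' := hu
      simp only [hC, Finset.mem_filter] at hu' ⊢
      obtain ⟨huA, p, hp, hpb⟩ := hu'
      refine ⟨hw.1, p + Pi.single x (if G.src x = u then -γ else γ), ?_, ?_⟩
      · intro y hy
        have hyx : y ≠ x := by
          rintro rfl
          apply hy
          simp only [Finset.mem_sdiff, mem_inside]
          rcases hxe with ⟨h1, h2⟩ | ⟨h1, h2⟩ <;> rw [h1, h2] <;> tauto
        simp [hp y hy, hyx]
      · intro z
        rw [bd_add, hpb, bd_single]
        have huw : u ≠ w := fun h => hw.2 (h ▸ hu)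
        rcases hxe with ⟨h1, h2⟩ | ⟨h1, h2⟩
        · simp only [h1, h2, if_true]; split_ifs <;> simp_all
        · simp only [h1, h2]; split_ifs <;> simp_all
    rcases hb with ⟨h1, h2⟩ | ⟨h1, h2⟩
    · exact hmem _ _ h1 h2 (Or.inl ⟨rfl, rfl⟩)
    · exact hmem _ _ h2 h1 (Or.inr ⟨rfl, rfl⟩)
  rw [← hCA] at hu
  exact (Finset.mem_filter.1 hu).2

lemma ConnOff.exists_flow_single {S : Finset E} {A : Finset V} (h : G.ConnOff S A) {x : E}
    (hx : x ∈ G.inside A) (hxS : x ∈ S) (γ : Γ) : ∃ φ : E → Γ, G.IsFlow φ ∧ φ x = γ ∧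
      SuppIn φ (insert x (G.inside A \ S)) := by
  rw [mem_inside] at hx
  obtain ⟨p, hp, hb⟩ := h.exists_path hx.2 hx.1 γ
  refine ⟨p + Pi.single x γ, ?_, ?_, ?_⟩
  · rw [isFlow_iff]; intro v; rw [bd_add, hb, bd_single]; abel
  · simp [hp x (by simp [hxS])]
  · intro y hy
    rw [Finset.mem_insert, not_or] at hy
    simp [hp y hy.2, hy.1]

lemma ConnOff.exists_flow_extend {S T : Finset E} {A : Finset V} (h : G.ConnOff S A)
    (hT : T ⊆ G.inside A) (hTS : T ⊆ S) (g : E → Γ) : ∃ φ : E → Γ, G.IsFlow φ ∧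
      (∀ x ∈ T, φ x = g x) ∧ SuppIn φ (T ∪ (G.inside A \ S)) := by
  have hex : ∀ x : E, ∃ φ : E → Γ, x ∈ T → (G.IsFlow φ ∧ φ x = g x ∧
      SuppIn φ (insert x (G.inside A \ S))) := by
    intro x
    by_cases hx : x ∈ T
    · obtain ⟨φ, hφ⟩ := h.exists_flow_single (hT hx) (hTS hx) (g x)
      exact ⟨φ, fun _ => hφ⟩
    · exact ⟨0, fun h => absurd h hx⟩
  choose χ hχ using hex
  refine ⟨∑ x ∈ T, χ x, IsFlow.sum T fun x hx => (hχ x hx).1, ?_, ?_⟩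
  · intro x hx
    rw [Finset.sum_apply, Finset.sum_eq_single x, (hχ x hx).2.1]
    · intro y hy hyx
      refine (hχ y hy).2.2 x ?_
      simp [Ne.symm hyx, hTS hx]
    · exact fun h => absurd hx h
  · intro y hy
    rw [Finset.mem_union, not_or] at hy
    rw [Finset.sum_apply]
    refine Finset.sum_eq_zero fun x hx => (hχ x hx).2.2 y ?_
    rw [Finset.mem_insert, not_or]
    exact ⟨fun h => hy.1 (h ▸ hx), hy.2⟩

lemma SuppIn.mono {φ : E → Γ} {T T' : Finset E} (h : SuppIn φ T) (hT : T ⊆ T') : SuppIn φ T' :=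
  fun x hx => h x fun hx' => hx (hT hx')

lemma SuppIn.add {φ ψ : E → Γ} {T : Finset E} (h : SuppIn φ T) (h' : SuppIn ψ T) :
    SuppIn (φ + ψ) T := fun x hx => by simp [h x hx, h' x hx]

lemma cnt_eq_card {X Y : Finset V} (h : Disjoint X Y) :
    G.cnt X Y = (Finset.univ.filter fun x => G.Btw x X Y).card := by
  rw [cnt, Finset.card_filter]
  refine Finset.sum_congr rfl fun x _ => ?_
  have h1 := fun v (hv : v ∈ X) => Finset.disjoint_left.1 h hv
  have := h1 (G.src x); have := h1 (G.tgt x)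
  unfold Btw
  split_ifs <;> first | rfl | (exfalso; tauto)

lemma exists_zmod_three (a b a' b' k : ZMod 3) (hk : k ≠ 0) :
    ∃ c : ZMod 3, a + c ≠ b ∧ a' + c * k ≠ b' := by
  revert a b a' b' k; decide

/-- If two disjoint connected sets are joined by at least two edges, some flow on their union
avoids prescribed values on all edges between them. -/
lemma exists_flow_between {X Y : Finset V} (hd : Disjoint X Y) (hX : G.Conn X) (hY : G.Conn Y)
    (h2 : 2 ≤ G.cnt X Y) (f : E → ZMod 3) : ∃ ψ : E → ZMod 3, G.IsFlow ψ ∧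
      SuppIn ψ (G.inside (X ∪ Y)) ∧ ∀ x, G.Btw x X Y → ψ x ≠ f x := by
  set T := Finset.univ.filter fun x => G.Btw x X Y with hT
  have hnot : ∀ x, G.Btw x X Y → x ∉ G.inside X ∧ x ∉ G.inside Y := by
    intro x hx
    have h1 := fun v (hv : v ∈ X) => Finset.disjoint_left.1 hd hv
    have := h1 (G.src x); have := h1 (G.tgt x)
    simp only [mem_inside]
    unfold Btw at hx
    tauto
  have hTin : T ⊆ G.inside (X ∪ Y) := by
    intro x hx
    have hx := (Finset.mem_filter.1 hx).2
    unfold Btw at hx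
    simp only [mem_inside, Finset.mem_union]; tauto
  rw [cnt_eq_card hd] at h2
  obtain ⟨e₀, he₀, e₁, he₁, hne⟩ := Finset.one_lt_card.1 h2
  have hb₀ : G.Btw e₀ X Y := (Finset.mem_filter.1 he₀).2
  have hb₁ : G.Btw e₁ X Y := (Finset.mem_filter.1 he₁).2
  have hc : G.ConnOff (T.erase e₀) (X ∪ Y) := by
    refine ConnOff.union_of_btw ?_ ?_ ⟨e₀, by simp, hb₀⟩
    · refine ConnOff.anti hX fun x hx h1 h2 => ?_
      simp only [hT, Finset.mem_erase, Finset.mem_filter] at hx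
      exact absurd (mem_inside.2 ⟨h1, h2⟩) (hnot x hx.2.2).1
    · refine ConnOff.anti hY fun x hx h1 h2 => ?_
      simp only [hT, Finset.mem_erase, Finset.mem_filter] at hx
      exact absurd (mem_inside.2 ⟨h1, h2⟩) (hnot x hx.2.2).2
  obtain ⟨φ, hφ, hφv, hφs⟩ := hc.exists_flow_extend (T := (T.erase e₀).erase e₁)
    (((Finset.erase_subset _ _).trans (Finset.erase_subset _ _)).trans hTin)
    (Finset.erase_subset _ _) (fun x => f x + 1)
  obtain ⟨χ, hχ, hχ₁, hχs⟩ := hc.exists_flow_single (x := e₁) (hTin he₁)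
    (Finset.mem_erase.2 ⟨Ne.symm hne, he₁⟩) (1 : ZMod 3)
  have hχ₀ : χ e₀ ≠ 0 := by
    intro h0
    have hside : ∀ x, G.Btw x X Y → ¬ (G.src x ∈ X ↔ G.tgt x ∈ X) := by
      intro x hx
      have h1 := fun v (hv : v ∈ X) => Finset.disjoint_left.1 hd hv
      have := h1 (G.src x); have := h1 (G.tgt x)
      unfold Btw at hx
      tauto
    have := hχ.eq_zero_of_bridge (X := X) (hside e₁ hb₁) (by
      intro y hy hy0
      have h1 : y ∈ insert e₁ (G.inside (X ∪ Y) \ T.erase e₀) := by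
        by_contra h; exact hy0 (hχs y h)
      rw [Finset.mem_insert, Finset.mem_sdiff, mem_inside, Finset.mem_union, Finset.mem_union] at h1
      have hye : y ≠ e₀ := by rintro rfl; exact hy0 h0
      have h2 : ¬ G.Btw y X Y := fun h => (h1.resolve_left hy).2 (by simp [hT, hye, h])
      have h3 := h1.resolve_left hy
      have h4 := fun v (hv : v ∈ X) => Finset.disjoint_left.1 hd hv
      have := h4 (G.src y); have := h4 (G.tgt y)
      unfold Btw at h2
      tauto)
    rw [hχ₁] at this
    exact absurd this (by decide)
  obtain ⟨c, hc1, hc0⟩ := exists_zmod_three (φ e₁) (f e₁) (φ e₀) (f e₀) (χ e₀) hχ₀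
  refine ⟨φ + fun x => c * χ x, hφ.add (hχ.smul c), ?_, ?_⟩
  · refine SuppIn.add (hφs.mono ?_) fun x hx => ?_
    · refine Finset.union_subset ?_ Finset.sdiff_subset
      exact ((Finset.erase_subset _ _).trans (Finset.erase_subset _ _)).trans hTin
    · rw [hχs x, mul_zero]
      intro h
      rcases Finset.mem_insert.1 h with rfl | h
      · exact hx (hTin he₁)
      · exact hx (Finset.sdiff_subset h)
  · intro x hx
    by_cases h1 : x = e₁
    · subst h1; simpa [hχ₁] using hc1
    by_cases h0 : x = e₀
    · subst h0; simpa using hc0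
    have hxT : x ∈ T := by simp [hT, hx]
    have hφx := hφv x (by simp [h0, h1, hxT])
    have hχx := hχs x (by simp [h0, h1, hxT])
    simp [hφx, hχx]

/-- Some flow inside `D` avoids prescribed values on all edges inside `D` except those in `S`. -/
def Closable (G : Multigraph V E) (D : Finset V) (S : Finset E) : Prop :=
  ∀ f : E → ZMod 3, ∃ ψ : E → ZMod 3, G.IsFlow ψ ∧ SuppIn ψ (G.inside D) ∧
    ∀ x ∈ G.inside D, x ∉ S → ψ x ≠ f x

/-- `S` is the exceptional edge set of an ear-like decomposition of the subgraph induced on `D`. -/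
structure RootGood (G : Multigraph V E) (D : Finset V) (S : Finset E) : Prop where
  sub : S ⊆ G.inside D
  conn : G.ConnOff S D
  flow : G.Closable D S

/-- The set `S` of edges inside `H` is the exceptional edge set of a decomposition that extends
the already treated set `X` to `X ∪ H`. -/
structure StateGood (G : Multigraph V E) (X H : Finset V) (S : Finset E) : Prop where
  sub : S ⊆ G.inside H
  conn : G.ConnOff S H
  flow : G.Closable (X ∪ H) (G.inside X ∪ S)

lemma closable_inside (Y : Finset V) : G.Closable Y (G.inside Y) :=
  fun _ => ⟨0, isFlow_zero, fun _ _ => rfl, fun _ hx hx' => absurd hx hx'⟩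

lemma Closable.glue {X Y : Finset V} {S : Finset E} (hd : Disjoint X Y) (hX : G.Conn X)
    (hY : G.Conn Y) (h2 : 2 ≤ G.cnt X Y) (hS : G.Closable Y S) :
    G.Closable (X ∪ Y) (G.inside X ∪ S) := by
  intro f
  obtain ⟨ψ, hψ, hψs, hψb⟩ := exists_flow_between hd hX hY h2 f
  obtain ⟨χ, hχ, hχs, hχb⟩ := hS (f - ψ)
  refine ⟨ψ + χ, hψ.add hχ, hψs.add (hχs.mono (inside_mono Finset.subset_union_right)), ?_⟩
  intro x hx hxS
  rw [Finset.mem_union, not_or] at hxS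
  by_cases hxY : x ∈ G.inside Y
  · intro h
    exact hχb x hxY hxS.2 (by simp [← h])
  · have hbt : G.Btw x X Y := by
      have h3 := hxS.1
      rw [mem_inside] at hx hxY h3
      simp only [Finset.mem_union] at hx
      unfold Btw; tauto
    simpa [hχs x hxY] using hψb x hbt

lemma Closable.compose {Y Z : Finset V} {S₁ S₂ : Finset E} (hX : Y ⊆ Z)
    (h₁ : G.Closable Y S₁) (h₂ : G.Closable Z (G.inside Y ∪ S₂)) : G.Closable Z (S₁ ∪ S₂) := by
  intro f
  obtain ⟨ψ, hψ, hψs, hψb⟩ := h₂ f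
  obtain ⟨χ, hχ, hχs, hχb⟩ := h₁ (f - ψ)
  refine ⟨ψ + χ, hψ.add hχ, hψs.add (hχs.mono (inside_mono hX)), ?_⟩
  intro x hx hxS
  rw [Finset.mem_union, not_or] at hxS
  by_cases hxY : x ∈ G.inside Y
  · intro h
    exact hχb x hxY hxS.1 (by simp [← h])
  · simpa [hχs x hxY] using hψb x hx (by simp [hxS.2]; simpa using hxY)

lemma connOff_attach {Y H : Finset V} {S₂ : Finset E} (hYH : Y ⊆ H) (hS : S₂ ⊆ G.inside (H \ Y))
    (hc : G.ConnOff S₂ (H \ Y)) (hn : ∀ y ∈ Y, 0 < G.cnt {y} (H \ Y)) :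
    G.ConnOff (G.inside Y ∪ S₂) H := by
  have h1 : G.ConnOff (G.inside Y ∪ S₂) (H \ Y) := by
    refine hc.anti fun x hx hs ht => ?_
    rw [Finset.mem_union, mem_inside] at hx
    rw [Finset.mem_sdiff] at hs
    tauto
  have h2 := h1.attach (B := Y) (by
    intro y hy
    obtain ⟨x, hx⟩ := cnt_pos.1 (hn y hy)
    refine ⟨x, ?_, hx⟩
    rw [Finset.mem_union, not_or]
    simp only [Btw, Finset.mem_singleton, Finset.mem_sdiff] at hx
    refine ⟨fun h => ?_, fun h => ?_⟩
    · rw [mem_inside] at h; tauto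
    · have := mem_inside.1 (hS h)
      simp only [Finset.mem_sdiff] at this
      rcases hx with ⟨rfl, hx⟩ | ⟨hx, rfl⟩ <;> tauto)
  rwa [Finset.sdiff_union_of_subset hYH] at h2

lemma StateGood.of_piece {X Y H : Finset V} {S₂ : Finset E} (hXH : Disjoint X H) (hYH : Y ⊆ H)
    (hX : G.Conn X) (hY : G.Conn Y) (h2 : 2 ≤ G.cnt X Y)
    (hn : ∀ y ∈ Y, 0 < G.cnt {y} (H \ Y)) (h : G.StateGood (X ∪ Y) (H \ Y) S₂) :
    G.StateGood X H (G.inside Y ∪ S₂) := by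
  have hU : X ∪ Y ∪ H \ Y = X ∪ H := by grind
  refine ⟨Finset.union_subset (inside_mono hYH) (h.sub.trans (inside_mono Finset.sdiff_subset)),
    ?_, ?_⟩
  · exact connOff_attach hYH h.sub h.conn hn
  · have h1 := (closable_inside (G := G) Y).glue (hXH.mono_right hYH) hX hY h2
    have h3 := h.flow
    rw [hU] at h3
    have := h1.compose (Finset.union_subset_union_right hYH) h3
    rwa [Finset.union_assoc] at this

lemma StateGood.of_root {X D H : Finset V} {S₁ S₂ : Finset E} (hXH : Disjoint X H) (hDH : D ⊆ H)
    (hX : G.Conn X) (h2 : 2 ≤ G.cnt X D) (hn : 0 < G.cnt D (H \ D)) (h₁ : G.RootGood D S₁)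
    (h : G.StateGood (X ∪ D) (H \ D) S₂) : G.StateGood X H (S₁ ∪ S₂) := by
  have hU : X ∪ D ∪ H \ D = X ∪ H := by grind
  refine ⟨Finset.union_subset (h₁.sub.trans (inside_mono hDH))
    (h.sub.trans (inside_mono Finset.sdiff_subset)), ?_, ?_⟩
  · rw [← Finset.union_sdiff_of_subset hDH]
    obtain ⟨x, hx⟩ := cnt_pos.1 hn
    refine ConnOff.union_of_btw (h₁.conn.anti ?_) (h.conn.anti ?_) ⟨x, ?_, hx⟩
    · intro y hy hs ht
      refine (Finset.mem_union.1 hy).resolve_right fun hy => ?_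
      have := mem_inside.1 (h.sub hy)
      simp only [Finset.mem_sdiff] at this; tauto
    · intro y hy hs ht
      refine (Finset.mem_union.1 hy).resolve_left fun hy => ?_
      have := mem_inside.1 (h₁.sub hy)
      simp only [Finset.mem_sdiff] at hs; tauto
    · rw [Finset.mem_union, not_or]
      simp only [Btw, Finset.mem_sdiff] at hx
      refine ⟨fun h' => ?_, fun h' => ?_⟩
      · have := mem_inside.1 (h₁.sub h'); tauto
      · have := mem_inside.1 (h.sub h')
        simp only [Finset.mem_sdiff] at this; tauto
  · have h1 := h₁.flow.glue (hXH.mono_right hDH) hX h₁.conn.conn h2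
    have h3 := h.flow
    rw [hU] at h3
    have := h1.compose (Finset.union_subset_union_right hDH) h3
    rwa [Finset.union_assoc] at this

lemma RootGood.state {X H : Finset V} {S : Finset E} (h : G.RootGood H S) (hXH : Disjoint X H)
    (hX : G.Conn X) (h2 : 2 ≤ G.cnt X H) : G.StateGood X H S :=
  ⟨h.sub, h.conn, h.flow.glue hXH hX h.conn.conn h2⟩

lemma RootGood.of_state {Y D : Finset V} {S₂ : Finset E} (hYD : Y ⊆ D)
    (hn : ∀ y ∈ Y, 0 < G.cnt {y} (D \ Y)) (h : G.StateGood Y (D \ Y) S₂) :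
    G.RootGood D (G.inside Y ∪ S₂) := by
  refine ⟨Finset.union_subset (inside_mono hYD) (h.sub.trans (inside_mono Finset.sdiff_subset)),
    connOff_attach hYD h.sub h.conn hn, ?_⟩
  have := h.flow
  rwa [Finset.union_sdiff_of_subset hYD] at this

/-- The set `Y` can be recovered from the exceptional set. -/
lemma eq_of_inside_union_eq {Y Y' H : Finset V} {S S' : Finset E} {z : V}
    (hY : G.Conn Y) (hY' : G.Conn Y') (hz : z ∈ Y) (hz' : z ∈ Y')
    (hS : S ⊆ G.inside (H \ Y)) (hS' : S' ⊆ G.inside (H \ Y'))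
    (h : G.inside Y ∪ S = G.inside Y' ∪ S') : Y = Y' := by
  have key : ∀ {Y Y' : Finset V} {S S' : Finset E}, G.Conn Y → z ∈ Y → z ∈ Y' →
      S' ⊆ G.inside (H \ Y') → G.inside Y ∪ S = G.inside Y' ∪ S' → Y ⊆ Y' := by
    intro Y Y' S S' hY hz hz' hS' h
    by_contra hn
    obtain ⟨x, -, hx⟩ := hY.2 (Y ∩ Y') Finset.inter_subset_left ⟨z, by simp [hz, hz']⟩
      (fun h => hn (Finset.inter_eq_left.1 h))
    simp only [Btw, Finset.mem_inter, Finset.mem_sdiff] at hx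
    have hxY : x ∈ G.inside Y ∪ S := Finset.mem_union_left _ (by rw [mem_inside]; tauto)
    rw [h, Finset.mem_union] at hxY
    rcases hxY with h1 | h1
    · rw [mem_inside] at h1; tauto
    · have := mem_inside.1 (hS' h1)
      simp only [Finset.mem_sdiff] at this; tauto
  exact subset_antisymm (key hY hz hz' hS' h) (key hY' hz' hz hS h.symm)

lemma inside_union_injOn {Y H : Finset V} {S S' : Finset E} (hS : S ⊆ G.inside (H \ Y))
    (hS' : S' ⊆ G.inside (H \ Y)) (h : G.inside Y ∪ S = G.inside Y ∪ S') : S = S' := by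
  have key : ∀ {S S' : Finset E}, S ⊆ G.inside (H \ Y) →
      G.inside Y ∪ S = G.inside Y ∪ S' → S ⊆ S' := by
    intro S S' hS h x hx
    have h1 : x ∈ G.inside Y ∪ S' := h ▸ Finset.mem_union_right _ hx
    refine (Finset.mem_union.1 h1).resolve_left fun h2 => ?_
    have h3 := mem_inside.1 (hS hx)
    rw [mem_inside] at h2
    simp only [Finset.mem_sdiff] at h3; tauto
  exact subset_antisymm (key hS h) (key hS' h.symm)

/-- Two different choices of the first piece lead to disjoint families of exceptional sets. -/
lemma card_add_card_le {Y Y' H : Finset V} {z : V} {F F' T : Finset (Finset E)}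
    (hY : G.Conn Y) (hY' : G.Conn Y') (hz : z ∈ Y) (hz' : z ∈ Y') (hne : Y ≠ Y')
    (hF : ∀ S ∈ F, S ⊆ G.inside (H \ Y) ∧ G.inside Y ∪ S ∈ T)
    (hF' : ∀ S ∈ F', S ⊆ G.inside (H \ Y') ∧ G.inside Y' ∪ S ∈ T) :
    F.card + F'.card ≤ T.card := by
  rw [← Finset.card_image_of_injOn (s := F) (f := fun S => G.inside Y ∪ S)
      (fun S hS S' hS' h => inside_union_injOn (hF S hS).1 (hF S' hS').1 h),
    ← Finset.card_image_of_injOn (s := F') (f := fun S => G.inside Y' ∪ S)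
      (fun S hS S' hS' h => inside_union_injOn (hF' S hS).1 (hF' S' hS').1 h),
    ← Finset.card_union_of_disjoint]
  · refine Finset.card_le_card (Finset.union_subset ?_ ?_) <;> intro S hS <;>
      obtain ⟨S', hS', rfl⟩ := Finset.mem_image.1 hS
    · exact (hF S' hS').2
    · exact (hF' S' hS').2
  · rw [Finset.disjoint_left]
    intro S h1 h2
    obtain ⟨S₁, hS₁, rfl⟩ := Finset.mem_image.1 h1
    obtain ⟨S₂, hS₂, h⟩ := Finset.mem_image.1 h2
    exact hne (eq_of_inside_union_eq hY hY' hz hz' (hF S₁ hS₁).1 (hF' S₂ hS₂).1 h.symm)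

end Flows

section Decompositions
variable {V E : Type} [Fintype V] [Fintype E]

/-- Every piece that can be split off has at most `M + 1` vertices. -/
def NoLong (G : Multigraph V E) (M : ℕ) : Prop :=
  ∀ D Y : Finset V, G.Valid D Y → G.Conn Dᶜ → Y.card ≤ M + 1

noncomputable def rootSets (G : Multigraph V E) (D : Finset V) : Finset (Finset E) :=
  Finset.univ.filter (G.RootGood D)

noncomputable def stateSets (G : Multigraph V E) (X H : Finset V) : Finset (Finset E) :=
  Finset.univ.filter (G.StateGood X H)

/-- There are many exceptional sets for `D`. -/
def RootClaim (G : Multigraph V E) (M : ℕ) (D : Finset V) : Prop :=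
  ∃ q, 2 ^ q ≤ (G.rootSets D).card ∧ D.card ≤ 2 * M * q + 1

/-- There are many exceptional sets extending `X` to `X ∪ H`. -/
def StateClaim (G : Multigraph V E) (M : ℕ) (X H : Finset V) : Prop :=
  ∃ q, 2 ^ q ≤ (G.stateSets X H).card ∧ H.card + 2 ≤ 2 * M * q + G.cnt H Hᶜ

/-- `X` is the treated part and `H` the remaining part, with exactly one edge leaving `X ∪ H`
from `H`. -/
structure IsState (G : Multigraph V E) (X H : Finset V) : Prop where
  disj : Disjoint X H
  connX : G.Conn X
  connH : G.Conn H
  connHc : G.Conn Hᶜ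
  one : G.cnt H (H ∪ X)ᶜ = 1

variable {G : Multigraph V E} {M : ℕ}

lemma exists_two_pow_succ_le {a b c q₁ q₂ : ℕ} (h₁ : 2 ^ q₁ ≤ a) (h₂ : 2 ^ q₂ ≤ b)
    (h : a + b ≤ c) : ∃ q, 2 ^ (q + 1) ≤ c ∧ (q = q₁ ∨ q = q₂) := by
  have h3 : ∀ q, q ≤ q₁ → q ≤ q₂ → 2 ^ (q + 1) ≤ c := by
    intro q hq₁ hq₂
    have := Nat.pow_le_pow_right (show 0 < 2 by norm_num) hq₁
    have := Nat.pow_le_pow_right (show 0 < 2 by norm_num) hq₂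
    rw [pow_succ]; omega
  rcases le_total q₁ q₂ with h4 | h4
  · exact ⟨q₁, h3 _ le_rfl h4, Or.inl rfl⟩
  · exact ⟨q₂, h3 _ h4 le_rfl, Or.inr rfl⟩

lemma cnt_compl_eq {D X : Finset V} (h : Disjoint X D) (K : Finset V) :
    G.cnt K Dᶜ = G.cnt K X + G.cnt K (D ∪ X)ᶜ := by
  rw [← cnt_union_right]
  · congr 1
    ext v
    have := (Finset.disjoint_left.1 h) (a := v)
    simp only [Finset.mem_compl, Finset.mem_union]
    tauto
  · rw [Finset.disjoint_left]; simp; tauto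

lemma cnt_compl_union_eq {D H X : Finset V} (hD : D ⊆ H) (h : Disjoint X H) (K : Finset V) :
    G.cnt K (D ∪ X)ᶜ = G.cnt K (H \ D) + G.cnt K (H ∪ X)ᶜ := by
  rw [← cnt_union_right]
  · congr 1
    ext v
    have := (Finset.disjoint_left.1 h) (a := v)
    have := @hD v
    simp only [Finset.mem_compl, Finset.mem_union, Finset.mem_sdiff]
    tauto
  · rw [Finset.disjoint_left]; simp; tauto

lemma Valid.cnt_le (hG : G.CubicThreeConn) {D Y : Finset V} (h : G.Valid D Y) :
    G.cnt Y (D \ Y) ≤ Y.card ∧ G.cnt Y Dᶜ = 2 := by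
  have h1 := h.conn.two_mul_card_le
  have h2 := card_le_cnt h.nbr
  have h3 := hG.card Y
  rw [cnt_univ_split Y h.sub] at h3
  have := h.out
  omega

lemma Conn.sdiff_compl {D Y : Finset V} (hY : G.Conn Y) (hD : G.Conn Dᶜ)
    (h : 0 < G.cnt Y Dᶜ) : G.Conn (D \ Y)ᶜ := by
  have : (D \ Y)ᶜ = Y ∪ Dᶜ := by grind [Finset.mem_compl]
  rw [this]
  exact hY.union_of_cnt hD h

lemma cnt_sdiff_compl {D Y : Finset V} (hYD : Y ⊆ D) :
    G.cnt (D \ Y) (D \ Y)ᶜ + G.cnt Y Dᶜ = G.cnt D Dᶜ + G.cnt Y (D \ Y) := by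
  have h1 : (D \ Y)ᶜ = Y ∪ Dᶜ := by grind [Finset.mem_compl]
  rw [h1, cnt_union_right, cnt_sdiff hYD Dᶜ, cnt_comm (D \ Y) Y]
  · omega
  · rw [Finset.disjoint_left]; intro v hv; simp [hYD hv]

lemma root_branch (hG : G.CubicThreeConn) (hM : G.NoLong M) {D Y : Finset V}
    (h3 : G.cnt D Dᶜ = 3) (hDc : G.Conn Dᶜ) (hY : G.Valid D Y)
    (ih : ∀ X H, H.card < D.card → G.IsState X H → G.StateClaim M X H) :
    ∃ q, 2 ^ q ≤ (G.stateSets Y (D \ Y)).card ∧ D.card ≤ 2 * M * (q + 1) + 1 := by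
  have h1 := hY.cnt_le hG
  have hlong := hM D Y hY hDc
  have hcard := Finset.card_sdiff_add_card_eq_card hY.sub
  have hpos := hY.conn.1.card_pos
  obtain ⟨q, hq, hle⟩ := ih Y (D \ Y) (by omega)
    ⟨Finset.disjoint_sdiff, hY.conn, hY.connRest,
      hY.conn.sdiff_compl hDc (by omega), by
        rw [Finset.sdiff_union_of_subset hY.sub]
        have := cnt_sdiff (G := G) hY.sub Dᶜ
        omega⟩
  refine ⟨q, hq, ?_⟩
  have h2 := cnt_sdiff_compl (G := G) hY.sub
  rw [mul_add]
  omega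

lemma root_step (hG : G.CubicThreeConn) (hM : G.NoLong M) {D : Finset V}
    (h3 : G.cnt D Dᶜ = 3) (hD : G.Conn D) (hDc : G.Conn Dᶜ)
    (ih : ∀ X H, H.card < D.card → G.IsState X H → G.StateClaim M X H) : G.RootClaim M D := by
  have hDu : ∀ K ⊆ D, K ≠ Finset.univ := by
    rintro K hK rfl
    obtain ⟨u, hu⟩ := hDc.1
    exact (Finset.mem_compl.1 hu) (hK (Finset.mem_univ u))
  by_cases h1 : D.card = 1
  · obtain ⟨v, rfl⟩ := Finset.card_eq_one.1 h1
    have hin : ∀ x, x ∉ G.inside {v} := by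
      intro x hx
      rw [mem_inside] at hx
      have : 0 < G.cnt {v} {v} := cnt_pos.2 ⟨x, Or.inl hx⟩
      rw [hG.cnt_self] at this; omega
    refine ⟨0, ?_, by omega⟩
    rw [pow_zero]
    refine Finset.card_pos.2 ⟨∅, ?_⟩
    simp only [rootSets, Finset.mem_filter, Finset.mem_univ, true_and]
    exact ⟨by simp, ConnOff.singleton _ _, fun f => ⟨0, isFlow_zero, fun _ _ => rfl,
      fun x hx => absurd hx (hin x)⟩⟩
  have hpos := hD.1.card_pos
  have hle : ∀ v ∈ D, G.cnt {v} Dᶜ ≤ 1 := by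
    intro v hv
    have hne : (D.erase v).Nonempty := by
      rw [← Finset.card_pos, Finset.card_erase_of_mem hv]; omega
    have h4 := hG.cut (D.erase v) hne (hDu _ (Finset.erase_subset _ _))
    have hs : {v} ⊆ D := by simpa using hv
    rw [← Finset.sdiff_singleton_eq_erase] at h4
    have h5 := cnt_sdiff_compl (G := G) hs
    have h6 := cnt_univ_split (G := G) {v} hs
    rw [hG.deg] at h6
    omega
  have hbr : ∀ c ∈ D, 0 < G.cnt {c} Dᶜ → ∀ K ⊆ D.erase c, G.cnt K (D \ K) ≠ 1 := by
    intro c hc hcp K hK h4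
    have hKD := hK.trans (Finset.erase_subset _ _)
    have hKne : K.Nonempty := by
      rw [Finset.nonempty_iff_ne_empty]; rintro rfl; simp at h4
    have h5 := hG.le_cnt_add hKD hKne (hDu K hKD)
    have hcK : c ∈ D \ K := Finset.mem_sdiff.2 ⟨hc, fun h => Finset.notMem_erase c D (hK h)⟩
    have h6 := hG.cut (D \ K) ⟨c, hcK⟩ (hDu _ Finset.sdiff_subset)
    have h7 := cnt_sdiff_compl (G := G) hKD
    omega
  set O := D.filter fun v => 0 < G.cnt {v} Dᶜ with hO
  have hOcard : O.card = 3 := by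
    rw [← h3, cnt_eq_sum, hO, Finset.card_filter]
    refine Finset.sum_congr rfl fun v hv => ?_
    have := hle v hv
    split_ifs <;> omega
  obtain ⟨a, b, c, hab, hac, hbc, hOe⟩ := Finset.card_eq_three.1 hOcard
  have hmem : ∀ v, v = a ∨ v = b ∨ v = c → v ∈ D ∧ 0 < G.cnt {v} Dᶜ := by
    intro v hv
    have : v ∈ O := by rw [hOe]; simpa using hv
    exact Finset.mem_filter.1 this
  have ha := hmem a (by simp); have hb := hmem b (by simp); have hc := hmem c (by simp)
  have main : ∀ a b c, a ≠ b → a ≠ c → b ≠ c → (a ∈ D ∧ 0 < G.cnt {a} Dᶜ) →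
      (b ∈ D ∧ 0 < G.cnt {b} Dᶜ) → (c ∈ D ∧ 0 < G.cnt {c} Dᶜ) →
      ∃ Q ⊆ D.erase c, G.Valid D Q ∧ a ∈ Q ∧ b ∈ Q := by
    intro a b c hab hac hbc ha hb hc
    have haE : a ∈ D.erase c := Finset.mem_erase.2 ⟨hac, ha.1⟩
    have hs : {c} ⊆ D := by simpa using hc.1
    refine exists_valid_of_two hG hD (Finset.erase_subset _ _)
      (conn_erase_of_bridgeless hG hD hc.1 (hbr c hc.1 hc.2) ⟨a, haE⟩) ?_ haE
      (Finset.mem_erase.2 ⟨hbc, hb.1⟩) hab ha.2 hb.2 ?_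
    · rw [← Finset.sdiff_singleton_eq_erase, Finset.sdiff_sdiff_eq_self hs]
      exact Conn.singleton c
    · have := cnt_sdiff (G := G) hs Dᶜ
      rw [Finset.sdiff_singleton_eq_erase] at this
      have := hc.2
      omega
  obtain ⟨Y, hYs, hY, haY, hbY⟩ := main a b c hab hac hbc ha hb hc
  obtain ⟨Y', hYs', hY', hbY', hcY'⟩ := main b c a hbc hab.symm hac.symm hb hc ha
  obtain ⟨q₁, hq₁, hle₁⟩ := root_branch hG hM h3 hDc hY ih
  obtain ⟨q₂, hq₂, hle₂⟩ := root_branch hG hM h3 hDc hY' ih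
  have hne : Y ≠ Y' := by
    rintro rfl
    exact Finset.notMem_erase a D (hYs' haY)
  have key : ∀ Y, G.Valid D Y → ∀ S ∈ G.stateSets Y (D \ Y),
      S ⊆ G.inside (D \ Y) ∧ G.inside Y ∪ S ∈ G.rootSets D := by
    intro Y hY S hS
    have hS := (Finset.mem_filter.1 hS).2
    exact ⟨hS.sub, Finset.mem_filter.2 ⟨Finset.mem_univ _, RootGood.of_state hY.sub hY.nbr hS⟩⟩
  obtain ⟨q, hq, hq'⟩ := exists_two_pow_succ_le hq₁ hq₂
    (card_add_card_le hY.conn hY'.conn hbY hbY' hne (key Y hY) (key Y' hY'))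
  exact ⟨q + 1, hq, by rcases hq' with rfl | rfl <;> assumption⟩

/-- A minimal part of `H` attached to the outside of `X` by a single edge. -/
lemma exists_minimal_root {X H : Finset V} (hd : Disjoint X H) (hne : H.Nonempty)
    (h1 : G.cnt H (H ∪ X)ᶜ = 1) : ∃ D ⊆ H, ∃ d ∈ D, G.Conn D ∧ G.cnt D (D ∪ X)ᶜ = 1 ∧
      G.cnt {d} (D ∪ X)ᶜ = 1 ∧ ∀ K ⊆ D.erase d, G.cnt K (D \ K) ≠ 1 := by
  obtain ⟨D, hD, hmin⟩ := Finset.exists_min_image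
    (Finset.univ.filter fun D : Finset V => D ⊆ H ∧ D.Nonempty ∧ G.cnt D (D ∪ X)ᶜ = 1)
    Finset.card ⟨H, Finset.mem_filter.2 ⟨Finset.mem_univ _, subset_rfl, hne, h1⟩⟩
  simp only [Finset.mem_filter, Finset.mem_univ, true_and] at hD hmin
  obtain ⟨hDH, hDne, hD1⟩ := hD
  have hdD : Disjoint X D := hd.mono_right hDH
  have hsplit : ∀ K ⊆ D, G.cnt K (K ∪ X)ᶜ = G.cnt K (D \ K) + G.cnt K (D ∪ X)ᶜ :=
    fun K hK => cnt_compl_union_eq hK hdD K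
  have hlt : ∀ K ⊆ D, K.Nonempty → K ≠ D → G.cnt K (K ∪ X)ᶜ ≠ 1 := by
    intro K hK hKne hKD h
    exact hKD (Finset.eq_of_subset_of_card_le hK (hmin K ⟨hK.trans hDH, hKne, h⟩))
  obtain ⟨d, hd', hdp⟩ := exists_cnt_pos (show 0 < G.cnt D (D ∪ X)ᶜ by omega)
  have hle := cnt_singleton_le (G := G) (C := (D ∪ X)ᶜ) hd'
  refine ⟨D, hDH, d, hd', ?_, hD1, by omega, ?_⟩
  · rw [conn_iff]
    refine ⟨hDne, fun B hB hBne hBD => ?_⟩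
    by_contra h0
    have h2 := hlt B hB hBne hBD
    have h3 := hlt (D \ B) Finset.sdiff_subset
      (Finset.sdiff_nonempty.2 fun h => hBD (subset_antisymm hB h))
      (fun h => by
        obtain ⟨z, hz⟩ := hBne
        exact (Finset.mem_sdiff.1 (h.symm.subset (hB hz))).2 hz)
    rw [hsplit B hB] at h2
    rw [hsplit _ Finset.sdiff_subset, Finset.sdiff_sdiff_eq_self hB, cnt_comm (D \ B) B] at h3
    have h4 := cnt_sdiff (G := G) hB (D ∪ X)ᶜ
    omega
  · intro K hK h2
    have hKD := hK.trans (Finset.erase_subset _ _)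
    have hdK : d ∉ K := fun h => Finset.notMem_erase d D (hK h)
    have hKne : K.Nonempty := by
      rw [Finset.nonempty_iff_ne_empty]; rintro rfl; simp at h2
    refine hlt K hKD hKne (fun h => hdK (h ▸ hd')) ?_
    have h3 := cnt_mono (G := G) hK (subset_refl (D ∪ X)ᶜ)
    have h4 := cnt_sdiff (G := G) (A := {d}) (by simpa using hd') (D ∪ X)ᶜ
    rw [Finset.sdiff_singleton_eq_erase] at h4
    rw [hsplit K hKD]
    omega

lemma Conn.sdiff_of_le_one {H D : Finset V} (hH : G.Conn H) (hD : D ⊆ H)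
    (h1 : G.cnt D (H \ D) ≤ 1) (hne : (H \ D).Nonempty) (hDne : D.Nonempty) : G.Conn (H \ D) := by
  rw [conn_iff]
  refine ⟨hne, fun B hB hBne hBD => ?_⟩
  by_contra h0
  have key : ∀ B ⊆ H \ D, B.Nonempty → G.cnt B ((H \ D) \ B) = 0 → 0 < G.cnt B D := by
    intro B hB hBne h0
    obtain ⟨z, hz⟩ := hDne
    have h2 := hH.cnt_pos (hB.trans Finset.sdiff_subset) hBne (by
      rintro rfl; exact (Finset.mem_sdiff.1 (hB (hD hz))).2 hz)
    have h3 : H \ B = ((H \ D) \ B) ∪ D := by grind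
    rw [h3, cnt_union_right (by grind [Finset.disjoint_left])] at h2
    omega
  have h2 := key B hB hBne (by omega)
  have h3 := key ((H \ D) \ B) Finset.sdiff_subset
    (Finset.sdiff_nonempty.2 fun h => hBD (subset_antisymm hB h)) (by
      rw [Finset.sdiff_sdiff_eq_self hB, cnt_comm]; omega)
  have h4 := cnt_sdiff (G := G) hB D
  rw [cnt_comm] at h1
  omega

/-- A root part with only three outgoing edges. -/
lemma state_step_root {X H D : Finset V} {d : V} (hs : G.IsState X H)
    (hDH : D ⊆ H) (hd : d ∈ D) (hDc : G.Conn D) (hD1 : G.cnt D (D ∪ X)ᶜ = 1)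
    (h3 : G.cnt D Dᶜ = 3)
    (ihR : ∀ D : Finset V, D.card ≤ H.card → G.cnt D Dᶜ = 3 → G.Conn D → G.Conn Dᶜ →
      G.RootClaim M D)
    (ihS : ∀ X' H', H'.card < H.card → G.IsState X' H' → G.StateClaim M X' H') :
    G.StateClaim M X H := by
  have hXD := hs.disj.mono_right hDH
  have hDX : G.cnt D X = 2 := by
    have := cnt_compl_eq (G := G) hXD D; omega
  have hXD2 : 2 ≤ G.cnt X D := by rw [cnt_comm]; omega
  have hsp := cnt_compl_union_eq (G := G) hDH hs.disj D
  by_cases hDe : D = H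
  · subst hDe
    obtain ⟨q, hq, hle⟩ := ihR D le_rfl h3 hs.connH hs.connHc
    refine ⟨q, hq.trans (Finset.card_le_card ?_), by omega⟩
    intro S hS
    simp only [rootSets, stateSets, Finset.mem_filter, Finset.mem_univ, true_and] at hS ⊢
    exact hS.state hs.disj hs.connX hXD2
  have hp := hs.connH.cnt_pos hDH ⟨d, hd⟩ hDe
  have hne : (H \ D).Nonempty := Finset.sdiff_nonempty.2 fun h => hDe (subset_antisymm hDH h)
  have hrest := hs.connH.sdiff_of_le_one hDH (by omega) hne ⟨d, hd⟩
  have hone : G.cnt (H \ D) (H ∪ X)ᶜ = 1 := by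
    have := cnt_sdiff (G := G) hDH (H ∪ X)ᶜ
    have := hs.one
    omega
  have hsplitH := cnt_compl_eq (G := G) hs.disj (H \ D)
  have hsplitD := cnt_compl_eq (G := G) hs.disj D
  have hDcc : G.Conn Dᶜ := by
    have := hrest.sdiff_compl hs.connHc (by omega)
    rwa [Finset.sdiff_sdiff_eq_self hDH] at this
  have hcard := Finset.card_sdiff_add_card_eq_card hDH
  have hpos : 0 < D.card := Finset.card_pos.2 ⟨d, hd⟩
  obtain ⟨q₁, hq₁, hle₁⟩ := ihR D (Finset.card_le_card hDH) h3 hDc hDcc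
  obtain ⟨q₂, hq₂, hle₂⟩ := ihS (X ∪ D) (H \ D) (by omega)
    ⟨Finset.disjoint_union_left.2 ⟨hs.disj.mono_right Finset.sdiff_subset, Finset.disjoint_sdiff⟩,
      hs.connX.union_of_cnt hDc (by omega), hrest,
      hDc.sdiff_compl hs.connHc (by omega), by
        have : H \ D ∪ (X ∪ D) = H ∪ X := by grind
        rw [this, hone]⟩
  refine ⟨q₁ + q₂, ?_, ?_⟩
  · rw [pow_add]
    refine (Nat.mul_le_mul hq₁ hq₂).trans ?_
    rw [← Finset.card_product]
    refine Finset.card_le_card_of_injOn (fun p => p.1 ∪ p.2) ?_ ?_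
    · rintro ⟨S₁, S₂⟩ hS
      simp only [rootSets, stateSets, Finset.coe_product, Set.mem_prod, Finset.mem_coe,
        Finset.mem_filter, Finset.mem_univ, true_and] at hS ⊢
      exact StateGood.of_root hs.disj hDH hs.connX hXD2 hp hS.1 hS.2
    · rintro ⟨S₁, S₂⟩ hS ⟨S₁', S₂'⟩ hS' h
      simp only [rootSets, stateSets, Finset.coe_product, Set.mem_prod, Finset.mem_coe,
        Finset.mem_filter, Finset.mem_univ, true_and] at hS hS' h
      have hdis : ∀ x, x ∈ G.inside D → x ∉ G.inside (H \ D) := by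
        intro x hx hx'
        rw [mem_inside] at hx hx'
        exact (Finset.mem_sdiff.1 hx'.1).2 hx.1
      have e1 : ∀ {S₁ S₂ : Finset E}, G.RootGood D S₁ → G.StateGood (X ∪ D) (H \ D) S₂ →
          (S₁ ∪ S₂) ∩ G.inside D = S₁ ∧ (S₁ ∪ S₂) ∩ G.inside (H \ D) = S₂ := by
        intro S₁ S₂ h₁ h₂
        have i1 := h₁.sub
        have i2 := h₂.sub
        constructor <;> ext x <;> have := hdis x <;> have := @i1 x <;> have := @i2 x <;>
          simp only [Finset.mem_inter, Finset.mem_union] <;> tauto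
      have a1 := e1 hS.1 hS.2
      have a2 := e1 hS'.1 hS'.2
      rw [h] at a1
      rw [Prod.mk.injEq]
      exact ⟨a1.1.symm.trans a2.1, a1.2.symm.trans a2.2⟩
  · have h5 := cnt_sdiff_compl (G := G) hDH
    rw [mul_add]
    omega

lemma state_branch (hG : G.CubicThreeConn) (hM : G.NoLong M) {X H D Y : Finset V} {d : V}
    (hs : G.IsState X H) (hDH : D ⊆ H) (hd : d ∈ D)
    (hD1 : G.cnt D (D ∪ X)ᶜ = 1) (hd1 : G.cnt {d} (D ∪ X)ᶜ = 1) (hYd : Y ⊆ D.erase d)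
    (hY : G.Valid D Y)
    (ihS : ∀ X' H', H'.card < H.card → G.IsState X' H' → G.StateClaim M X' H') :
    G.Valid H Y ∧ 2 ≤ G.cnt X Y ∧ ∃ q, 2 ^ q ≤ (G.stateSets (X ∪ Y) (H \ Y)).card ∧
      H.card + 2 ≤ 2 * M * (q + 1) + G.cnt H Hᶜ := by
  have hXD := hs.disj.mono_right hDH
  have hYH := hY.sub.trans hDH
  have hsd : {d} ⊆ D := by simpa using hd
  have hY0 : G.cnt Y (D ∪ X)ᶜ = 0 := by
    have h3 := cnt_mono (G := G) hYd (subset_refl (D ∪ X)ᶜ)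
    have h4 := cnt_sdiff (G := G) hsd (D ∪ X)ᶜ
    rw [Finset.sdiff_singleton_eq_erase] at h4
    omega
  have hYX := cnt_compl_eq (G := G) hXD Y
  have hYXH := cnt_compl_eq (G := G) hs.disj Y
  have hYH0 := cnt_compl_union_eq (G := G) hDH hs.disj Y
  have hout := hY.out
  have hrest : G.Conn (H \ Y) := by
    by_cases hDe : D = H
    · exact hDe ▸ hY.connRest
    have hp := hs.connH.cnt_pos hDH ⟨d, hd⟩ hDe
    have hne : (H \ D).Nonempty := Finset.sdiff_nonempty.2 fun h => hDe (subset_antisymm hDH h)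
    have hsp := cnt_compl_union_eq (G := G) hDH hs.disj D
    have hr := hs.connH.sdiff_of_le_one hDH (by omega) hne ⟨d, hd⟩
    have : H \ Y = (D \ Y) ∪ (H \ D) := by
      ext v
      have hYs := hY.sub
      have := @hDH v; have := @hYs v
      simp only [Finset.mem_sdiff, Finset.mem_union]; tauto
    rw [this]
    refine hY.connRest.union_of_cnt hr ?_
    have := cnt_sdiff (G := G) hY.sub (H \ D)
    omega
  have hv : G.Valid H Y := by
    refine ⟨hYH, hY.conn, hrest, fun y hy => ?_, by omega⟩
    exact lt_of_lt_of_le (hY.nbr y hy) (cnt_mono subset_rfl (Finset.sdiff_subset_sdiff hDH subset_rfl))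
  have hXY : 2 ≤ G.cnt X Y := by rw [cnt_comm]; omega
  refine ⟨hv, hXY, ?_⟩
  have hlong := hM H Y hv hs.connHc
  have hcard := Finset.card_sdiff_add_card_eq_card hYH
  have hpos := hY.conn.1.card_pos
  obtain ⟨q, hq, hle⟩ := ihS (X ∪ Y) (H \ Y) (by omega)
    ⟨Finset.disjoint_union_left.2 ⟨hs.disj.mono_right Finset.sdiff_subset, Finset.disjoint_sdiff⟩,
      hs.connX.union_of_cnt hY.conn (by omega), hrest,
      hY.conn.sdiff_compl hs.connHc (by omega), by
        have h6 : H \ Y ∪ (X ∪ Y) = H ∪ X := by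
          rw [Finset.union_comm X Y, ← Finset.union_assoc, Finset.sdiff_union_of_subset hYH]
        rw [h6]
        have := cnt_sdiff (G := G) hYH (H ∪ X)ᶜ
        have := hs.one
        omega⟩
  refine ⟨q, hq, ?_⟩
  have h5 := cnt_sdiff_compl (G := G) hYH
  have h6 := hv.cnt_le hG
  rw [mul_add]
  omega

lemma state_step (hG : G.CubicThreeConn) (hM : G.NoLong M) {X H : Finset V} (hs : G.IsState X H)
    (ihR : ∀ D : Finset V, D.card ≤ H.card → G.cnt D Dᶜ = 3 → G.Conn D → G.Conn Dᶜ →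
      G.RootClaim M D)
    (ihS : ∀ X' H', H'.card < H.card → G.IsState X' H' → G.StateClaim M X' H') :
    G.StateClaim M X H := by
  obtain ⟨D, hDH, d, hd, hDc, hD1, hd1, hbr⟩ := exists_minimal_root hs.disj hs.connH.1 hs.one
  have hDu : D ≠ Finset.univ := by
    rintro rfl
    obtain ⟨x, hx⟩ := hs.connX.1
    exact Finset.disjoint_left.1 hs.disj hx (hDH (Finset.mem_univ x))
  have hcut := hG.cut D ⟨d, hd⟩ hDu
  by_cases h3 : G.cnt D Dᶜ = 3
  · exact state_step_root hs hDH hd hDc hD1 h3 ihR ihS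
  have hdo : 0 < G.cnt {d} Dᶜ := by
    have := cnt_compl_eq (G := G) (hs.disj.mono_right hDH) {d}
    omega
  obtain ⟨Y, Y', hYs, hYs', hY, hY', hne, z, hz, hz'⟩ :=
    exists_two_valid hG hDc hd hdo hbr (by omega)
  obtain ⟨hv₁, hx₁, q₁, hq₁, hle₁⟩ := state_branch hG hM hs hDH hd hD1 hd1 hYs hY ihS
  obtain ⟨hv₂, hx₂, q₂, hq₂, hle₂⟩ := state_branch hG hM hs hDH hd hD1 hd1 hYs' hY' ihS
  have key : ∀ Y, G.Valid H Y → 2 ≤ G.cnt X Y → ∀ S ∈ G.stateSets (X ∪ Y) (H \ Y),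
      S ⊆ G.inside (H \ Y) ∧ G.inside Y ∪ S ∈ G.stateSets X H := by
    intro Y hY hXY S hS
    have hS := (Finset.mem_filter.1 hS).2
    exact ⟨hS.sub, Finset.mem_filter.2 ⟨Finset.mem_univ _,
      StateGood.of_piece hs.disj hY.sub hs.connX hY.conn hXY hY.nbr hS⟩⟩
  obtain ⟨q, hq, hq'⟩ := exists_two_pow_succ_le hq₁ hq₂
    (card_add_card_le hY.conn hY'.conn hz hz' hne (key Y hv₁ hx₁) (key Y' hv₂ hx₂))
  exact ⟨q + 1, hq, by rcases hq' with rfl | rfl <;> assumption⟩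

theorem root_and_state_claim (hG : G.CubicThreeConn) (hM : G.NoLong M) (n : ℕ) :
    (∀ D : Finset V, D.card ≤ n → G.cnt D Dᶜ = 3 → G.Conn D → G.Conn Dᶜ → G.RootClaim M D) ∧
    (∀ X H : Finset V, H.card ≤ n → G.IsState X H → G.StateClaim M X H) := by
  induction n with
  | zero =>
    refine ⟨fun D h _ hc => ?_, fun X H h hs => ?_⟩
    · have := hc.1.card_pos; omega
    · have := hs.connH.1.card_pos; omega
  | succ n ih =>
    have hR : ∀ D : Finset V, D.card ≤ n + 1 → G.cnt D Dᶜ = 3 → G.Conn D → G.Conn Dᶜ →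
        G.RootClaim M D := fun D h h3 hc hcc =>
      root_step hG hM h3 hc hcc fun X H hlt hs => ih.2 X H (by omega) hs
    exact ⟨hR, fun X H h hs => state_step hG hM hs (fun D hD => hR D (hD.trans h))
      fun X' H' hlt hs' => ih.2 X' H' (by omega) hs'⟩

end Decompositions

section Pairs
variable {V E : Type} [Fintype V] [Fintype E] {G : Multigraph V E}

/-- The flows over `ZMod 2` that avoid `f₂` wherever `φ` fails to avoid `f₃`. -/
noncomputable def fibre (G : Multigraph V E) (f₂ : E → ZMod 2) (f₃ φ : E → ZMod 3) :
    Finset (E → ZMod 2) :=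
  Finset.univ.filter fun ψ => G.IsFlow ψ ∧ ∀ x, φ x = f₃ x → ψ x ≠ f₂ x

/-- The pairs of flows over `ZMod 2` and `ZMod 3` that avoid the pair `f₂`, `f₃`. -/
noncomputable def flowPairs (G : Multigraph V E) (f₂ : E → ZMod 2) (f₃ : E → ZMod 3) :
    Finset (Σ _ : E → ZMod 3, E → ZMod 2) :=
  (Finset.univ.filter fun φ : E → ZMod 3 => G.IsFlow φ).sigma (G.fibre f₂ f₃)

lemma sum_fibre_le {f₂ : E → ZMod 2} {f₃ : E → ZMod 3} {Φ : Finset (E → ZMod 3)}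
    (h : ∀ φ ∈ Φ, G.IsFlow φ) :
    ∑ φ ∈ Φ, (G.fibre f₂ f₃ φ).card ≤ (G.flowPairs f₂ f₃).card := by
  rw [flowPairs, Finset.card_sigma]
  exact Finset.sum_le_sum_of_subset fun φ hφ => by simp [h φ hφ]

lemma IsFlow.map {Γ Δ : Type} [AddCommGroup Γ] [AddCommGroup Δ] {φ : E → Γ} (hφ : G.IsFlow φ)
    (g : Γ →+ Δ) : G.IsFlow fun x => g (φ x) := by
  intro v
  have := congrArg g (hφ v)
  simpa only [map_sum, apply_ite g, map_zero] using this

/-- Pairs of flows over `ZMod 2` and `ZMod 3` correspond to flows over `ZMod 6`. -/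
lemma card_flowPairs_le (f : E → ZMod 6) :
    (G.flowPairs (fun x => (ZMod.chineseRemainder (m := 2) (n := 3) (by norm_num) (f x)).1)
      (fun x => (ZMod.chineseRemainder (m := 2) (n := 3) (by norm_num) (f x)).2)).card ≤
      Nat.card {φ : E → ZMod 6 // G.IsFlow φ ∧ ∀ e : E, φ e ≠ f e} := by
  set c : ZMod 6 ≃+* ZMod 2 × ZMod 3 := ZMod.chineseRemainder (m := 2) (n := 3) (by norm_num)
  rw [Nat.card_eq_fintype_card, Fintype.card_subtype]
  refine Finset.card_le_card_of_injOn (fun p x => c.symm (p.2 x, p.1 x)) ?_ ?_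
  · rintro ⟨φ, ψ⟩ hp
    simp only [flowPairs, fibre, Finset.coe_sigma, Set.mem_sigma_iff, Finset.mem_coe,
      Finset.mem_filter, Finset.mem_univ, true_and] at hp
    simp only [Finset.coe_filter, Finset.mem_univ, true_and, Set.mem_ofPred_eq]
    obtain ⟨hφ, hψ, h⟩ := hp
    refine ⟨?_, fun x hx => ?_⟩
    · have h1 := (hψ.map (AddMonoidHom.inl (ZMod 2) (ZMod 3))).add
        (hφ.map (AddMonoidHom.inr (ZMod 2) (ZMod 3)))
      have h2 := h1.map c.symm.toAddEquiv.toAddMonoidHom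
      convert h2 using 2
      simp
    · have h1 : c (f x) = (ψ x, φ x) := by rw [← hx]; exact c.apply_symm_apply _
      exact h x (by rw [h1]) (by rw [h1])
  · rintro ⟨φ, ψ⟩ - ⟨φ', ψ'⟩ - h
    have h1 : ∀ x, (ψ x, φ x) = (ψ' x, φ' x) := fun x => c.symm.injective (congrFun h x)
    have h2 : φ = φ' := funext fun x => (Prod.ext_iff.1 (h1 x)).2
    have h3 : ψ = ψ' := funext fun x => (Prod.ext_iff.1 (h1 x)).1
    rw [h2, h3]

/-- Values of a flow can be prescribed on an edge set whose complement is connected. -/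
lemma two_pow_le_card_fibre {S : Finset E} (hS : G.ConnOff S Finset.univ) {f₂ : E → ZMod 2}
    {f₃ φ : E → ZMod 3} (hB : ∀ x, φ x = f₃ x → x ∈ S) :
    2 ^ (S.filter fun x => φ x ≠ f₃ x).card ≤ (G.fibre f₂ f₃ φ).card := by
  have hin : S ⊆ G.inside Finset.univ := fun x _ => by simp
  have key : ∀ T : Finset E, ∃ ψ : E → ZMod 2, G.IsFlow ψ ∧
      ∀ x ∈ S, ψ x = if φ x = f₃ x then f₂ x + 1 else if x ∈ T then 1 else 0 := by
    intro T
    obtain ⟨ψ, h1, h2, -⟩ := hS.exists_flow_extend (Γ := ZMod 2) hin subset_rfl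
      (fun x => if φ x = f₃ x then f₂ x + 1 else if x ∈ T then 1 else 0)
    exact ⟨ψ, h1, h2⟩
  choose ψ hψ hψS using key
  rw [← Finset.card_powerset]
  refine Finset.card_le_card_of_injOn ψ ?_ ?_
  · intro T _
    simp only [fibre, Finset.coe_filter, Finset.mem_univ, true_and, Set.mem_ofPred_eq]
    refine ⟨hψ T, fun x hx => ?_⟩
    rw [hψS T x (hB x hx), if_pos hx]
    simp
  · have hsub : ∀ T T' : Finset E, T ⊆ S.filter (fun x => φ x ≠ f₃ x) → ψ T = ψ T' → T ⊆ T' := by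
      intro T T' hT h x hx
      have hxS := Finset.mem_filter.1 (hT hx)
      have h1 := hψS T x hxS.1
      rw [h, hψS T' x hxS.1, if_neg hxS.2, if_neg hxS.2, if_pos hx] at h1
      by_contra hn
      rw [if_neg hn] at h1
      exact zero_ne_one h1
    intro T hT T' hT' h
    simp only [Finset.coe_powerset, Set.mem_preimage, Set.mem_powerset_iff,
      Finset.coe_subset] at hT hT'
    exact subset_antisymm (hsub T T' hT h) (hsub T' T hT' h.symm)

lemma card_fibre_le {f₂ : E → ZMod 2} {f₃ φ : E → ZMod 3} (h : G.IsFlow φ) :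
    (G.fibre f₂ f₃ φ).card ≤ (G.flowPairs f₂ f₃).card := by
  simpa using sum_fibre_le (G := G) (f₂ := f₂) (f₃ := f₃) (Φ := {φ}) (by simpa using h)

lemma card_filter_card_le (k : ℕ) :
    (Finset.univ.filter fun T : Finset E => T.card ≤ k).card ≤ (Fintype.card E + 1) ^ k := by
  have : Fintype.card (Fin k → Option E) = (Fintype.card E + 1) ^ k := by simp
  rw [← this, ← Finset.card_univ]
  refine Finset.card_le_card_of_surjOn
    (fun g => Finset.univ.filter fun x => ∃ i, g i = some x) fun T hT => ?_
  simp only [Finset.coe_filter, Finset.mem_univ, true_and, Set.mem_ofPred_eq] at hT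
  obtain ⟨e⟩ : Nonempty (T ↪ Fin k) := by
    rw [Function.Embedding.nonempty_iff_card_le]; simpa using hT
  refine ⟨fun i => if h : ∃ t : T, e t = i then some h.choose.1 else none, by simp, ?_⟩
  ext x
  simp only [Finset.mem_filter, Finset.mem_univ, true_and]
  constructor
  · rintro ⟨i, hi⟩
    split_ifs at hi with h
    rw [← Option.some.inj hi]
    exact h.choose.2
  · intro hx
    have h : ∃ t : T, e t = e ⟨x, hx⟩ := ⟨_, rfl⟩
    refine ⟨e ⟨x, hx⟩, ?_⟩
    rw [dif_pos h, e.injective h.choose_spec]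

lemma card_eq_three_of_compl (hG : G.CubicThreeConn) (r : V) :
    G.cnt {r} {r}ᶜ = 3 := by
  have h1 := hG.deg r
  have h2 := hG.cnt_self r
  rw [cnt_sdiff_right (Finset.subset_univ {r}), ← Finset.compl_eq_univ_sdiff] at h1
  omega

/-- Each exceptional set of the complement of a vertex yields a flow over `ZMod 3` together with
many flows over `ZMod 2`. -/
lemma exists_flow_of_rootGood (hG : G.CubicThreeConn) {r : V} {S : Finset E}
    (hS : G.RootGood {r}ᶜ S) (f₂ : E → ZMod 2) (f₃ : E → ZMod 3) : ∃ φ : E → ZMod 3, G.IsFlow φ ∧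
      (∀ x, φ x = f₃ x → x ∈ S) ∧
      4 * 2 ^ (S.filter fun x => φ x ≠ f₃ x).card ≤ (G.fibre f₂ f₃ φ).card := by
  have h3 := card_eq_three_of_compl hG r
  have hd : Disjoint ({r} : Finset V) {r}ᶜ := disjoint_compl_right
  have hu : ({r} : Finset V) ∪ {r}ᶜ = Finset.univ := Finset.union_compl _
  have hin : G.inside {r} = ∅ := by
    ext x
    simp only [mem_inside, Finset.notMem_empty, iff_false]
    intro hx
    have := cnt_pos.2 ⟨x, show G.Btw x {r} {r} from Or.inl hx⟩
    rw [hG.cnt_self] at this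
    omega
  have hcl := hS.flow.glue hd (Conn.singleton r) hS.conn.conn (by omega)
  rw [hu, hin, Finset.empty_union] at hcl
  obtain ⟨φ, hφ, -, hφS⟩ := hcl f₃
  have hB : ∀ x, φ x = f₃ x → x ∈ S := fun x hx => by
    by_contra hn; exact hφS x (by simp) hn hx
  refine ⟨φ, hφ, hB, ?_⟩
  rw [cnt_eq_card hd] at h3
  set R := Finset.univ.filter fun x => G.Btw x {r} {r}ᶜ with hR
  obtain ⟨y, hy⟩ : R.Nonempty := by rw [← Finset.card_pos]; omega
  have hRS : ∀ x ∈ R, x ∉ S := by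
    intro x hx hxS
    have h1 := mem_inside.1 (hS.sub hxS)
    have h2 := (Finset.mem_filter.1 hx).2
    unfold Btw at h2
    simp only [Finset.mem_compl] at h1 h2
    tauto
  have hc : G.ConnOff (S ∪ R.erase y) Finset.univ := by
    rw [← hu]
    refine (ConnOff.singleton _ r).union_of_btw (hS.conn.anti ?_) ⟨y, ?_, (Finset.mem_filter.1 hy).2⟩
    · intro x hx h1 h2
      refine (Finset.mem_union.1 hx).resolve_right fun hx => ?_
      have h2 := (Finset.mem_filter.1 (Finset.mem_of_mem_erase hx)).2
      unfold Btw at h2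
      simp only [Finset.mem_compl] at *
      tauto
    · simp [hRS y hy]
  have := two_pow_le_card_fibre (f₂ := f₂) hc (fun x hx => Finset.mem_union_left _ (hB x hx))
  refine le_trans (le_of_eq ?_) this
  rw [Finset.filter_union, Finset.card_union_of_disjoint]
  · have : (R.erase y).filter (fun x => φ x ≠ f₃ x) = R.erase y := by
      rw [Finset.filter_eq_self]
      exact fun x hx h => hRS x (Finset.mem_of_mem_erase hx) (hB x h)
    rw [this, Finset.card_erase_of_mem hy, h3, pow_add]; ring
  · rw [Finset.disjoint_left]
    intro x hx hx'
    exact hRS x (Finset.mem_of_mem_erase (Finset.mem_filter.1 hx').1) (Finset.mem_filter.1 hx).1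

/-- Either a single flow over `ZMod 3` has many partners, or there are many flows over `ZMod 3`. -/
lemma le_card_flowPairs_or (hG : G.CubicThreeConn) (r : V) (f₂ : E → ZMod 2) (f₃ : E → ZMod 3)
    (k : ℕ) : 4 * 2 ^ (k + 1) ≤ (G.flowPairs f₂ f₃).card ∨
      4 * (G.rootSets {r}ᶜ).card ≤ (G.flowPairs f₂ f₃).card * (Fintype.card E + 1) ^ k := by
  have key : ∀ S : Finset E, ∃ φ : E → ZMod 3, G.RootGood {r}ᶜ S → G.IsFlow φ ∧
      (∀ x, φ x = f₃ x → x ∈ S) ∧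
      4 * 2 ^ (S.filter fun x => φ x ≠ f₃ x).card ≤ (G.fibre f₂ f₃ φ).card := by
    intro S
    by_cases hS : G.RootGood {r}ᶜ S
    · obtain ⟨φ, h⟩ := exists_flow_of_rootGood hG hS f₂ f₃
      exact ⟨φ, fun _ => h⟩
    · exact ⟨0, fun h => absurd h hS⟩
  choose φ hφ using key
  have hmem : ∀ S, S ∈ G.rootSets {r}ᶜ ↔ G.RootGood {r}ᶜ S := fun S => by simp [rootSets]
  by_cases hlarge : ∃ S ∈ G.rootSets {r}ᶜ, k + 1 ≤ (S.filter fun x => φ S x ≠ f₃ x).card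
  · obtain ⟨S, hS, hk⟩ := hlarge
    obtain ⟨h1, -, h3⟩ := hφ S ((hmem S).1 hS)
    left
    have := Nat.pow_le_pow_right (show 0 < 2 by norm_num) hk
    have := card_fibre_le (f₂ := f₂) (f₃ := f₃) h1
    omega
  right
  push Not at hlarge
  set Φ := (G.rootSets {r}ᶜ).image φ with hΦ
  have h1 : 4 * Φ.card ≤ (G.flowPairs f₂ f₃).card := by
    refine le_trans ?_ (sum_fibre_le (G := G) (Φ := Φ) ?_)
    · rw [mul_comm, ← smul_eq_mul]
      refine Finset.card_nsmul_le_sum _ _ _ fun ψ hψ => ?_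
      obtain ⟨S, hS, rfl⟩ := Finset.mem_image.1 hψ
      have := (hφ S ((hmem S).1 hS)).2.2
      have := Nat.one_le_two_pow (n := (S.filter fun x => φ S x ≠ f₃ x).card)
      omega
    · intro ψ hψ
      obtain ⟨S, hS, rfl⟩ := Finset.mem_image.1 hψ
      exact (hφ S ((hmem S).1 hS)).1
  have h2 : (G.rootSets {r}ᶜ).card ≤
      (Φ ×ˢ Finset.univ.filter fun T : Finset E => T.card ≤ k).card := by
    refine Finset.card_le_card_of_injOn
      (fun S => (φ S, S.filter fun x => φ S x ≠ f₃ x)) ?_ ?_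
    · intro S hS
      have := hlarge S hS
      simp only [Finset.coe_product, Set.mem_prod, Finset.mem_coe, Finset.mem_filter,
        Finset.mem_univ, true_and]
      exact ⟨Finset.mem_image_of_mem _ hS, by omega⟩
    · intro S hS S' hS' h
      obtain ⟨h1, h2⟩ := Prod.ext_iff.1 h
      dsimp only at h1 h2
      have hb := (hφ S ((hmem S).1 hS)).2.1
      have hb' := (hφ S' ((hmem S').1 hS')).2.1
      rw [← h1] at hb' h2
      ext x
      have h3 := Finset.ext_iff.1 h2 x
      simp only [Finset.mem_filter] at h3
      have := hb x
      have := hb' x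
      tauto
  rw [Finset.card_product] at h2
  calc 4 * (G.rootSets {r}ᶜ).card ≤ 4 * (Φ.card * (Fintype.card E + 1) ^ k) := by
        exact Nat.mul_le_mul_left _ (h2.trans (Nat.mul_le_mul_left _ (card_filter_card_le k)))
    _ = (4 * Φ.card) * (Fintype.card E + 1) ^ k := by ring
    _ ≤ _ := Nat.mul_le_mul_right _ h1

end Pairs

section LongCycle
variable {V E : Type} [Fintype V] [Fintype E] {G : Multigraph V E}

lemma cnt_self_eq (A : Finset V) : G.cnt A A = 2 * (G.inside A).card := by
  rw [inside, Finset.card_filter, Finset.mul_sum]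
  unfold cnt
  exact Finset.sum_congr rfl fun x _ => by split_ifs <;> rfl

/-- `C` is the vertex set of an induced cycle with connected complement. -/
structure LongCycle (G : Multigraph V E) (C : Finset V) : Prop where
  conn : G.Conn C
  connCompl : G.Conn Cᶜ
  one : ∀ v ∈ C, G.cnt {v} Cᶜ = 1

lemma LongCycle.of_valid (hG : G.CubicThreeConn) {D Y : Finset V} (hY : G.Valid D Y)
    (hD : G.Conn Dᶜ) : ∃ C, Y ⊆ C ∧ G.LongCycle C := by
  obtain ⟨hY1, hY2⟩ := hY.cnt_le hG
  have hsub := hY.sub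
  have hYne : Y.Nonempty := hY.conn.1
  have hUY : D \ Y ⊆ Yᶜ := fun v hv => by
    rw [Finset.mem_compl]; exact (Finset.mem_sdiff.1 hv).2
  have hWY : Dᶜ ⊆ Yᶜ := Finset.compl_subset_compl.2 hsub
  have hYc : Yᶜ = (D \ Y) ∪ Dᶜ := by
    ext v; have := @hsub v
    simp only [Finset.mem_compl, Finset.mem_union, Finset.mem_sdiff]; tauto
  have hWU : Yᶜ \ Dᶜ = D \ Y := by
    ext v; have := @hsub v
    simp only [Finset.mem_compl, Finset.mem_sdiff]; tauto
  have hcut := hG.cut Dᶜ hD.1 (by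
    intro h
    obtain ⟨y, hy⟩ := hYne
    have : y ∈ Dᶜ := h ▸ Finset.mem_univ y
    exact Finset.mem_compl.1 this (hsub hy))
  rw [compl_compl, cnt_sdiff_right hsub, cnt_comm _ Y] at hcut
  have hYcc : G.Conn Yᶜ := by
    rw [hYc]
    exact hY.connRest.union_of_cnt hD (by rw [cnt_comm]; omega)
  obtain ⟨Q, hQW, hQ⟩ : ∃ Q ⊆ Dᶜ, G.Valid Yᶜ Q := by
    obtain ⟨a, haW, ha⟩ := exists_cnt_pos (G := G) (A := Dᶜ) (C := Y) (by rw [cnt_comm]; omega)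
    by_cases h2 : 2 ≤ G.cnt {a} Y
    · have haY : a ∈ Yᶜ := hWY haW
      have hs : ({a} : Finset V) ⊆ Yᶜ := by simpa using haY
      have hda := hG.deg a
      have hsa := hG.cnt_self a
      have hsp := cnt_univ_split (G := G) {a} hs
      rw [compl_compl] at hsp
      have hcut' := hG.le_cnt_add (K := {a}) hs (by simp) (by
        intro h
        obtain ⟨y, hy⟩ := hYne
        have : y ∈ ({a} : Finset V) := h ▸ Finset.mem_univ y
        rw [Finset.mem_singleton] at this
        exact Finset.mem_compl.1 haY (this ▸ hy))
      have hne : (Yᶜ.erase a).Nonempty := by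
        obtain ⟨u, hu⟩ := hY.connRest.1
        refine ⟨u, Finset.mem_erase.2 ⟨?_, hUY hu⟩⟩
        rintro rfl
        exact Finset.mem_compl.1 haW (Finset.mem_sdiff.1 hu).1
      have h2' : G.cnt {a} Y ≤ 2 := by
        have := cnt_singleton_le (G := G) (C := Y) haW
        rw [cnt_comm Dᶜ] at this
        omega
      have h4 : G.cnt {a} (Yᶜ \ {a}) = 1 := by
        omega
      refine ⟨{a}, by simpa using haW, hs, Conn.singleton a, ?_, ?_, ?_⟩
      · rw [Finset.sdiff_singleton_eq_erase] at *
        exact hYcc.erase_of_leaf haY (by omega) hne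
      · intro y hy; rw [Finset.mem_singleton.1 hy, h4]; norm_num
      · rw [compl_compl]; exact h2
    · obtain ⟨b, hbW, hb⟩ := exists_cnt_pos (G := G) (A := Dᶜ \ {a}) (C := Y) (by
        have := cnt_sdiff (G := G) (A := {a}) (B := Dᶜ) (by simpa using haW) Y
        rw [cnt_comm Dᶜ] at this
        omega)
      rw [Finset.mem_sdiff, Finset.mem_singleton] at hbW
      obtain ⟨Q, hQ, hv, -, -⟩ := exists_valid_of_two hG hYcc hWY hD (by rw [hWU]; exact hY.connRest)
        haW hbW.1 (Ne.symm hbW.2) (by rw [compl_compl]; exact ha) (by rw [compl_compl]; exact hb)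
        (by rw [compl_compl, cnt_comm]; omega)
      exact ⟨Q, hQ, hv⟩
  obtain ⟨hQ1, hQ2⟩ := hQ.cnt_le hG
  rw [compl_compl] at hQ2
  have hdis : Disjoint Y Q := by
    rw [Finset.disjoint_left]; intro v hv hv'
    exact Finset.mem_compl.1 (hQW hv') (hsub hv)
  have hC : (Y ∪ Q)ᶜ = Yᶜ \ Q := by
    ext v; simp only [Finset.mem_compl, Finset.mem_union, Finset.mem_sdiff]; tauto
  have hUC : D \ Y ⊆ Yᶜ \ Q := by
    intro v hv
    rw [Finset.mem_sdiff]
    exact ⟨hUY hv, fun h => Finset.mem_compl.1 (hQW h) (Finset.mem_sdiff.1 hv).1⟩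
  have hpos : ∀ v ∈ Y ∪ Q, 1 ≤ G.cnt {v} (Yᶜ \ Q) := by
    intro v hv
    rcases Finset.mem_union.1 hv with h | h
    · exact (hY.nbr v h).trans_le (cnt_mono subset_rfl hUC)
    · exact hQ.nbr v h
  refine ⟨Y ∪ Q, Finset.subset_union_left, ?_, ?_, ?_⟩
  · exact hY.conn.union_of_cnt hQ.conn (by rw [cnt_comm]; omega)
  · rw [hC]; exact hQ.connRest
  · rw [hC]
    have hle : G.cnt (Y ∪ Q) (Yᶜ \ Q) ≤ (Y ∪ Q).card := by
      rw [cnt_union hdis, Finset.card_union_of_disjoint hdis]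
      have h1 := cnt_compl_split (G := G) Y hsub
      have h2 := cnt_sdiff_right (G := G) hQ.sub Y
      rw [cnt_comm Y Q] at h2
      omega
    rw [cnt_eq_sum] at hle
    intro v hv
    have h1 := Finset.add_sum_erase (Y ∪ Q) (fun v => G.cnt {v} (Yᶜ \ Q)) hv
    have h2 := Finset.card_nsmul_le_sum ((Y ∪ Q).erase v) (fun v => G.cnt {v} (Yᶜ \ Q)) 1
      fun u hu => hpos u (Finset.mem_of_mem_erase hu)
    have h3 := Finset.card_erase_add_one hv
    have h4 := hpos v hv
    simp only [smul_eq_mul, mul_one] at h2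
    omega

variable {C : Finset V}

lemma LongCycle.two (hG : G.CubicThreeConn) (hC : G.LongCycle C) {v : V} (hv : v ∈ C) :
    G.cnt {v} C = 2 := by
  have h1 := hG.deg v
  have h2 := hC.one v hv
  rw [cnt_sdiff_right (Finset.subset_univ C), ← Finset.compl_eq_univ_sdiff] at h1
  omega

lemma LongCycle.cnt_eq (hG : G.CubicThreeConn) (hC : G.LongCycle C) {B : Finset V} (hB : B ⊆ C) :
    G.cnt B C = 2 * B.card := by
  rw [cnt_eq_sum, Finset.sum_congr rfl fun v hv => hC.two hG (hB hv)]
  simp [mul_comm]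

lemma LongCycle.card_inside (hG : G.CubicThreeConn) (hC : G.LongCycle C) :
    (G.inside C).card = C.card := by
  have h1 := hC.cnt_eq hG subset_rfl
  rw [cnt_self_eq] at h1
  omega

lemma LongCycle.two_le (hG : G.CubicThreeConn) (hC : G.LongCycle C) {B : Finset V} (hB : B ⊆ C)
    (hne : B.Nonempty) (hBC : B ≠ C) : 2 ≤ G.cnt B (C \ B) := by
  have h1 := hC.cnt_eq hG hB
  have h2 := hC.conn.cnt_pos hB hne hBC
  rw [cnt_sdiff_right hB, cnt_self_eq] at h1
  omega

lemma LongCycle.connOff (hG : G.CubicThreeConn) (hC : G.LongCycle C) (x : E) :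
    G.ConnOff {x} C := by
  refine ⟨hC.conn.1, fun B hB hne hBC => ?_⟩
  have h2 := hC.two_le hG hB hne hBC
  rw [cnt_eq_card Finset.disjoint_sdiff] at h2
  obtain ⟨y, hy, hyx⟩ := Finset.exists_mem_ne (Nat.lt_of_succ_le h2) x
  exact ⟨y, by simpa using hyx, (Finset.mem_filter.1 hy).2⟩

lemma LongCycle.conn_erase (hG : G.CubicThreeConn) (hC : G.LongCycle C) {v : V} (hv : v ∈ C)
    (hne : (C.erase v).Nonempty) : G.Conn (C.erase v) := by
  rw [conn_iff]
  refine ⟨hne, fun B hB hBne hBn => ?_⟩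
  by_contra h0
  have hvB : v ∉ B := fun h => Finset.notMem_erase v C (hB h)
  have hBC : B ⊆ C := hB.trans (Finset.erase_subset _ _)
  have hB'ne : (C.erase v \ B).Nonempty :=
    Finset.sdiff_nonempty.2 fun h => hBn (subset_antisymm hB h)
  have hB'C : C.erase v \ B ⊆ C := Finset.sdiff_subset.trans (Finset.erase_subset _ _)
  have e1 : C \ B = {v} ∪ (C.erase v \ B) := by
    ext u
    simp only [Finset.mem_sdiff, Finset.mem_union, Finset.mem_singleton, Finset.mem_erase]
    by_cases h : u = v
    · subst h; simp [hv, hvB]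
    · simp [h]
  have e2 : C \ (C.erase v \ B) = {v} ∪ B := by
    ext u
    have := @hBC u
    simp only [Finset.mem_sdiff, Finset.mem_union, Finset.mem_singleton, Finset.mem_erase]
    by_cases h : u = v
    · subst h; simp [hv]
    · simp [h]; tauto
  have h1 := hC.two_le hG hBC hBne (by rintro rfl; exact hvB hv)
  have h2 := hC.two_le hG hB'C hB'ne (by
    intro h
    have := (Finset.ext_iff.1 h v).2 hv
    simp at this)
  rw [e1, cnt_union_right (by simp)] at h1
  rw [e2, cnt_union_right (by simpa using hvB), cnt_comm _ B] at h2
  have h3 := hC.two hG hv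
  have h4 := cnt_sdiff_right (G := G) hBC {v}
  rw [e1, cnt_union_right (by simp), hG.cnt_self, cnt_comm {v} B, cnt_comm {v} (C.erase v \ B)] at h4
  omega

/-- Some flow inside `C` repairs at least half of the edges of `C`. -/
lemma LongCycle.exists_flow (hG : G.CubicThreeConn) (hC : G.LongCycle C) (g : E → ZMod 3) :
    ∃ χ : E → ZMod 3, G.IsFlow χ ∧ SuppIn χ (G.inside C) ∧
      C.card ≤ 2 * ((G.inside C).filter fun x => χ x ≠ g x).card := by
  set W := Finset.univ.filter fun χ : E → ZMod 3 => G.IsFlow χ ∧ SuppIn χ (G.inside C) with hW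
  have hWne : W.Nonempty := ⟨0, by simpa [hW] using ⟨isFlow_zero, fun _ _ => rfl⟩⟩
  have hx : ∀ x ∈ G.inside C, W.card ≤ 2 * (W.filter fun χ => χ x ≠ g x).card := by
    intro x hx
    obtain ⟨χ₀, h1, h2, h3⟩ := (hC.connOff hG x).exists_flow_single (Γ := ZMod 3) hx (by simp) 1
    have h3' : SuppIn χ₀ (G.inside C) := h3.mono (by
      rw [Finset.insert_subset_iff]; exact ⟨hx, Finset.sdiff_subset⟩)
    have : (W.filter fun χ => χ x = g x).card ≤ (W.filter fun χ => χ x ≠ g x).card := by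
      refine Finset.card_le_card_of_injOn (fun χ => χ + χ₀) ?_ (fun a _ b _ h => add_right_cancel h)
      intro χ hχ
      simp only [hW, Finset.coe_filter, Finset.mem_filter, Finset.mem_univ, true_and,
        Set.mem_ofPred_eq] at hχ ⊢
      refine ⟨⟨hχ.1.1.add h1, hχ.1.2.add h3'⟩, ?_⟩
      rw [Pi.add_apply, hχ.2, h2]
      simp
    have h4 := Finset.card_filter_add_card_filter_not (s := W) (fun χ => χ x = g x)
    simp only [ne_eq] at this ⊢
    omega
  by_contra! hn
  have hlt : ∑ χ ∈ W, 2 * ((G.inside C).filter fun x => χ x ≠ g x).card < ∑ χ ∈ W, C.card := by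
    refine Finset.sum_lt_sum_of_nonempty hWne fun χ hχ => ?_
    have := (Finset.mem_filter.1 hχ).2
    exact hn χ this.1 this.2
  have hge : ∑ χ ∈ W, C.card ≤ ∑ x ∈ G.inside C, 2 * (W.filter fun χ => χ x ≠ g x).card := by
    rw [Finset.sum_const, smul_eq_mul, ← hC.card_inside hG, mul_comm, ← smul_eq_mul]
    exact Finset.card_nsmul_le_sum _ _ _ hx
  simp only [Finset.card_filter, ← Finset.mul_sum] at hlt hge
  rw [Finset.sum_comm] at hlt
  omega

lemma LongCycle.two_pow_le (hG : G.CubicThreeConn) (hC : G.LongCycle C) {k : ℕ}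
    (hk : 2 * k ≤ C.card) (hk1 : 2 ≤ C.card) (f₂ : E → ZMod 2) (f₃ : E → ZMod 3) :
    2 ^ k ≤ (G.flowPairs f₂ f₃).card := by
  obtain ⟨r, hr⟩ := hC.conn.1
  have hne : (C.erase r).Nonempty := by
    rw [← Finset.card_pos, Finset.card_erase_of_mem hr]; omega
  have hY := hC.conn_erase hG hr hne
  have hrs : ({r} : Finset V) ⊆ C := by simpa using hr
  have hdis : Disjoint (C.erase r) Cᶜ :=
    (disjoint_compl_right (a := C)).mono_left (Finset.erase_subset _ _)
  have hrest : C.erase r ∪ Cᶜ = {r}ᶜ := by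
    ext v
    simp only [Finset.mem_union, Finset.mem_erase, Finset.mem_compl, Finset.mem_singleton]
    by_cases h : v = r
    · subst h; simp [hr]
    · simp [h]; tauto
  have hstate : G.IsState (C.erase r) Cᶜ := by
    refine ⟨hdis, hY, hC.connCompl, by rw [compl_compl]; exact hC.conn, ?_⟩
    rw [Finset.union_comm, hrest, compl_compl, cnt_comm]
    exact hC.one r hr
  have hM : G.NoLong (Fintype.card V) := fun D Y _ _ => (Finset.card_le_univ Y).trans (by omega)
  obtain ⟨q, hq, -⟩ := (root_and_state_claim hG hM _).2 _ _ le_rfl hstate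
  obtain ⟨S, hS⟩ : (G.stateSets (C.erase r) Cᶜ).Nonempty := by
    rw [← Finset.card_pos]; exact (Nat.two_pow_pos q).trans_le hq
  have hS : G.StateGood (C.erase r) Cᶜ S := (Finset.mem_filter.1 hS).2
  have hflow := hS.flow
  rw [hrest] at hflow
  have hrc : G.Conn {r}ᶜ := by
    rw [← hrest]
    refine hY.union_of_cnt hC.connCompl ?_
    obtain ⟨v, hv⟩ := hne
    have h1 := hC.one v (Finset.mem_of_mem_erase hv)
    have h2 := cnt_singleton_le (G := G) (C := Cᶜ) hv
    omega
  have hcl := hflow.glue disjoint_compl_right (Conn.singleton r) hrc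
    (by rw [card_eq_three_of_compl hG]; norm_num)
  rw [Finset.union_compl] at hcl
  obtain ⟨φ, hφ, -, hφS⟩ := hcl f₃
  obtain ⟨χ, hχ, hχs, hχc⟩ := hC.exists_flow hG (fun x => f₃ x - φ x)
  have hB : ∀ x, (φ + χ) x = f₃ x → x ∈ G.inside C ∪ S := by
    intro x hx
    by_contra hn
    rw [Finset.mem_union, not_or] at hn
    rw [Pi.add_apply, hχs x hn.1, add_zero] at hx
    refine hφS x (by simp) ?_ hx
    simp only [Finset.mem_union, not_or]
    exact ⟨fun h => hn.1 (inside_mono hrs h),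
      fun h => hn.1 (inside_mono (Finset.erase_subset _ _) h), hn.2⟩
  have hconn : G.ConnOff (G.inside C ∪ S) Finset.univ := by
    refine connOff_attach (Finset.subset_univ C) ?_ ?_ ?_
    · rw [← Finset.compl_eq_univ_sdiff]; exact hS.sub
    · rw [← Finset.compl_eq_univ_sdiff]; exact hS.conn
    · intro y hy
      rw [← Finset.compl_eq_univ_sdiff, hC.one y hy]; norm_num
  have h1 := two_pow_le_card_fibre (f₂ := f₂) hconn hB
  refine le_trans (Nat.pow_le_pow_right (by norm_num) ?_)
    (h1.trans (card_fibre_le (hφ.add hχ)))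
  have h2 : ((G.inside C).filter fun x => χ x ≠ f₃ x - φ x).card ≤
      ((G.inside C ∪ S).filter fun x => (φ + χ) x ≠ f₃ x).card := by
    refine Finset.card_le_card fun x hx => ?_
    rw [Finset.mem_filter] at hx ⊢
    refine ⟨Finset.mem_union_left _ hx.1, fun h => hx.2 ?_⟩
    rw [← h, Pi.add_apply]; ring
  omega

/-- A long piece forces many flows. -/
lemma two_pow_le_of_not_noLong (hG : G.CubicThreeConn) {k : ℕ} (h : ¬ G.NoLong (2 * k))
    (f₂ : E → ZMod 2) (f₃ : E → ZMod 3) : 2 ^ k ≤ (G.flowPairs f₂ f₃).card := by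
  unfold NoLong at h
  push Not at h
  obtain ⟨D, Y, hY, hD, hc⟩ := h
  obtain ⟨C, hYC, hC⟩ := LongCycle.of_valid hG hY hD
  have := Finset.card_le_card hYC
  exact hC.two_pow_le hG (by omega) (by omega) f₂ f₃

end LongCycle

section CubicBound

lemma two_rpow_le_of_alternatives {ℓ N R : ℕ} (hℓ : 11 ≤ ℓ) (h4 : 4 ≤ N)
    (hlong : ∀ K, 2 ^ K ≤ N ∨ ∃ q, 2 ^ q ≤ R ∧ 2 * ℓ ≤ 2 * (2 * K) * q + 2)
    (hmany : ∀ j, 4 * 2 ^ (j + 1) ≤ N ∨ 4 * R ≤ N * (3 * ℓ + 1) ^ j) :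
    (2 : ℝ) ^ (Real.sqrt ℓ / Real.logb 2 ℓ) ≤ N := by
  set L := Real.logb 2 ℓ with hL
  set k := Real.sqrt ℓ / L with hk
  have hN0 : (0 : ℝ) < N := by exact_mod_cast (by omega : 0 < N)
  have h11 : (11 : ℝ) ≤ ℓ := by exact_mod_cast hℓ
  have hℓ0 : (0 : ℝ) < ℓ := by linarith
  have hpow : ∀ K : ℕ, k ≤ K → 2 ^ K ≤ N → (2 : ℝ) ^ k ≤ N := by
    intro K hK h
    calc (2 : ℝ) ^ k ≤ (2 : ℝ) ^ (K : ℝ) := Real.rpow_le_rpow_of_exponent_le (by norm_num) hK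
      _ = ((2 ^ K : ℕ) : ℝ) := by rw [Real.rpow_natCast]; push_cast; rfl
      _ ≤ N := by exact_mod_cast h
  have hlog : ∀ n : ℕ, (2 : ℝ) ^ n ≤ ℓ → (n : ℝ) ≤ L := by
    intro n h
    rw [hL, Real.le_logb_iff_rpow_le (by norm_num) hℓ0, Real.rpow_natCast]
    exact h
  by_cases hk2 : k ≤ 2
  · exact hpow 2 (by exact_mod_cast hk2) h4
  push Not at hk2
  have hL3 : (3 : ℝ) ≤ L := by exact_mod_cast hlog 3 (by norm_num; linarith)
  have hLpos : 0 < L := by linarith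
  have hkL : k * L = Real.sqrt ℓ := div_mul_cancel₀ _ hLpos.ne'
  have hsq : (k * L) ^ 2 = ℓ := by rw [hkL, Real.sq_sqrt hℓ0.le]
  have hL4 : (4 : ℝ) ≤ L := by
    have : (16 : ℝ) ≤ ℓ := by
      rw [← hsq]
      nlinarith [mul_lt_mul'' hk2 (lt_of_lt_of_le (by norm_num : (2:ℝ) < 3) hL3) (by norm_num)
        (by norm_num)]
    exact_mod_cast hlog 4 (le_trans (by norm_num) this)
  obtain ⟨j, hj⟩ : ∃ j, ⌈k⌉₊ = j + 3 := by
    have : 2 < ⌈k⌉₊ := Nat.lt_ceil.2 (by exact_mod_cast hk2)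
    exact ⟨⌈k⌉₊ - 3, by omega⟩
  have hkj : k ≤ j + 3 := by
    have := Nat.le_ceil k
    rw [hj] at this
    exact_mod_cast this
  have hjk : (j : ℝ) ≤ k - 2 := by
    have := Nat.ceil_lt_add_one (show 0 ≤ k by linarith)
    rw [hj] at this
    push_cast at this
    linarith
  rcases hlong (j + 3) with h | ⟨q, hqR, hq⟩
  · exact hpow _ (by exact_mod_cast hkj) h
  rcases hmany j with h | h
  · refine hpow (j + 3) (by exact_mod_cast hkj) (le_trans (le_of_eq ?_) h)
    ring
  have h1 : (2 : ℝ) ^ (q + 2) ≤ N * (3 * ℓ + 1) ^ j := by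
    have : 2 ^ (q + 2) ≤ N * (3 * ℓ + 1) ^ j := by
      rw [pow_add]; omega
    exact_mod_cast this
  have h2 : (q : ℝ) + 2 ≤ Real.logb 2 N + j * Real.logb 2 (3 * ℓ + 1) := by
    have := Real.logb_le_logb_of_le (b := 2) (by norm_num) (by positivity) h1
    rw [Real.logb_mul hN0.ne' (by positivity), Real.logb_pow, Real.logb_pow,
      Real.logb_self_eq_one (by norm_num)] at this
    push_cast at this
    linarith
  have h3 : Real.logb 2 (3 * ℓ + 1) ≤ L + 2 := by
    have h5 : (3 * ℓ + 1 : ℝ) ≤ ℓ * 2 ^ (2 : ℕ) := by norm_num; linarith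
    have := Real.logb_le_logb_of_le (b := 2) (by norm_num) (by positivity) h5
    rw [Real.logb_mul hℓ0.ne' (by norm_num), Real.logb_pow,
      Real.logb_self_eq_one (by norm_num)] at this
    push_cast at this
    linarith
  have h5 : (ℓ : ℝ) ≤ 2 * (j + 3) * q + 1 := by
    have : ℓ ≤ 2 * (j + 3) * q + 1 := by
      have e : 2 * (2 * (j + 3)) * q = 2 * (2 * (j + 3) * q) := by ring
      omega
    exact_mod_cast this
  rw [← Real.le_logb_iff_rpow_le (by norm_num) hN0]
  have hj0 : (0 : ℝ) ≤ j := Nat.cast_nonneg j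
  by_contra! hlt
  have h6 : (q : ℝ) ≤ k - 2 + j * (L + 2) := by
    have := mul_le_mul_of_nonneg_left h3 hj0
    linarith
  have h7 : (q : ℝ) ≤ (k - 2) * (L + 3) := by
    have := mul_le_mul_of_nonneg_right hjk (show 0 ≤ L + 2 by linarith)
    linarith
  have h8 : 2 * ((j : ℝ) + 3) * q ≤ 2 * (k + 1) * ((k - 2) * (L + 3)) :=
    mul_le_mul (by linarith) h7 (Nat.cast_nonneg q) (by linarith)
  have h9 : 2 * (k + 1) * ((k - 2) * (L + 3)) = k ^ 2 * (2 * (L + 3)) - (2 * k + 4) * (L + 3) := by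
    ring
  have h10 : k ^ 2 * (2 * (L + 3)) ≤ k ^ 2 * L ^ 2 :=
    mul_le_mul_of_nonneg_left (by nlinarith) (sq_nonneg k)
  have h11 : 1 < (2 * k + 4) * (L + 3) := by nlinarith
  rw [mul_pow] at hsq
  linarith

variable {V E : Type} [Fintype V] [Fintype E] {G : Multigraph V E}

lemma CubicThreeConn.two_mul_card_edges (hG : G.CubicThreeConn) :
    2 * Fintype.card E = 3 * Fintype.card V := by
  have h1 := hG.card Finset.univ
  have h2 : G.inside Finset.univ = Finset.univ := by ext x; simp
  rw [cnt_self_eq, h2, Finset.card_univ, Finset.card_univ] at h1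
  exact h1

lemma conn_compl_singleton (hG : G.CubicThreeConn) (r : V) : G.Conn {r}ᶜ := by
  have hne : (Finset.univ.erase r).Nonempty := by
    rw [← Finset.card_pos, Finset.card_erase_of_mem (Finset.mem_univ r), Finset.card_univ]
    have := hG.two
    omega
  have he : ({r}ᶜ : Finset V) = Finset.univ.erase r := by
    rw [Finset.compl_eq_univ_sdiff, Finset.sdiff_singleton_eq_erase]
  rw [he, conn_iff]
  refine ⟨hne, fun B hB hBne hBn => ?_⟩
  by_contra h0
  have hrB : r ∉ B := fun h => Finset.notMem_erase r _ (hB h)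
  have h1 := hG.cut B hBne (by rintro rfl; exact hrB (Finset.mem_univ r))
  have hB'ne : (Finset.univ.erase r \ B).Nonempty :=
    Finset.sdiff_nonempty.2 fun h => hBn (subset_antisymm hB h)
  have h2 := hG.cut (Finset.univ.erase r \ B) hB'ne (by
    intro h
    have := (Finset.ext_iff.1 h r).2 (Finset.mem_univ r)
    simp at this)
  have e1 : Bᶜ = {r} ∪ (Finset.univ.erase r \ B) := by
    ext u
    by_cases h : u = r
    · subst h; simp [hrB]
    · simp [h]
  have e2 : (Finset.univ.erase r \ B)ᶜ = {r} ∪ B := by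
    ext u
    by_cases h : u = r
    · subst h; simp
    · simp [h]
  rw [e1, cnt_union_right (by simp)] at h1
  rw [e2, cnt_union_right (by simpa using hrB), cnt_comm _ B] at h2
  have h3 := hG.deg r
  have h4 := cnt_three_le (G := G) (A := {r}) (B := B) (C := Finset.univ.erase r \ B) (D := {r})
    (by simpa using hrB) (by simp) Finset.disjoint_sdiff
  rw [cnt_comm {r} B, cnt_comm {r} (Finset.univ.erase r \ B)] at h4
  omega

theorem CubicThreeConn.le_card_flowPairs (hG : G.CubicThreeConn) {ℓ : ℕ} (hℓ : 11 ≤ ℓ)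
    (hE : Fintype.card E = Fintype.card V + ℓ) (f₂ : E → ZMod 2) (f₃ : E → ZMod 3) :
    (2 : ℝ) ^ (Real.sqrt ℓ / Real.logb 2 ℓ) ≤ (G.flowPairs f₂ f₃).card := by
  have h23 := hG.two_mul_card_edges
  have hE3 : Fintype.card E = 3 * ℓ := by omega
  obtain ⟨r⟩ : Nonempty V := Fintype.card_pos_iff.1 (by omega)
  have hcard : ({r}ᶜ : Finset V).card + 1 = 2 * ℓ := by
    rw [Finset.card_compl, Finset.card_singleton]; omega
  have hroot : ∀ M, G.NoLong M → G.RootClaim M {r}ᶜ := fun M hM =>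
    (root_and_state_claim hG hM _).1 _ le_rfl
      (by rw [compl_compl, cnt_comm]; exact card_eq_three_of_compl hG r)
      (conn_compl_singleton hG r) (by rw [compl_compl]; exact Conn.singleton r)
  refine two_rpow_le_of_alternatives (R := (G.rootSets {r}ᶜ).card) hℓ ?_ (fun K => ?_) fun j => ?_
  · obtain ⟨q, hq, -⟩ := hroot (Fintype.card V)
      fun D Y _ _ => (Finset.card_le_univ Y).trans (by omega)
    have := Nat.one_le_two_pow (n := q)
    rcases le_card_flowPairs_or hG r f₂ f₃ 0 with h | h
    · omega
    · rw [pow_zero, mul_one] at h; omega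
  · by_cases hK : G.NoLong (2 * K)
    · obtain ⟨q, hq, hq'⟩ := hroot _ hK
      exact Or.inr ⟨q, hq, by omega⟩
    · exact Or.inl (two_pow_le_of_not_noLong hG hK f₂ f₃)
  · rw [← hE3]
    exact le_card_flowPairs_or hG r f₂ f₃ j

end CubicBound

section Reduction
variable {V E : Type}

/-- Every edge cut has at least three edges. -/
def ThreeCut [Fintype V] [Fintype E] (G : Multigraph V E) : Prop :=
  ∀ A : Finset V, A.Nonempty → A ≠ Finset.univ → 3 ≤ G.cnt A Aᶜ

/-- Split the vertex `v`: a new vertex `none` is joined to `v` by the new edge `none`, and each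
edge of `M` has one end at `v` moved to the new vertex. -/
noncomputable def split (G : Multigraph V E) (v : V) (M : Finset E) :
    Multigraph (Option V) (Option E) where
  src := fun e => e.elim (some v) fun x => if x ∈ M ∧ G.src x = v then none else some (G.src x)
  tgt := fun e => e.elim none fun x => if x ∈ M ∧ G.src x ≠ v then none else some (G.tgt x)

/-- The end of the edge `x` other than `v`. -/
noncomputable def otherEnd (G : Multigraph V E) (v : V) (x : E) : V :=
  if G.src x = v then G.tgt x else G.src x

variable {G : Multigraph V E} {v : V} {M : Finset E}

lemma split_src_none : (G.split v M).src none = some v := rfl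

lemma split_tgt_none : (G.split v M).tgt none = none := rfl

lemma split_of_notMem {x : E} (hx : x ∉ M) :
    (G.split v M).src (some x) = some (G.src x) ∧ (G.split v M).tgt (some x) = some (G.tgt x) := by
  simp [split, hx]

lemma split_of_mem {x : E} (hx : x ∈ M) :
    ((G.split v M).src (some x) = none ∧ (G.split v M).tgt (some x) = some (G.otherEnd v x)) ∨
    ((G.split v M).src (some x) = some (G.otherEnd v x) ∧ (G.split v M).tgt (some x) = none) := by
  by_cases h : G.src x = v
  · left; simp [split, otherEnd, hx, h]
  · right; simp [split, otherEnd, hx, h]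

lemma getD_split_src (x : E) : ((G.split v M).src (some x)).getD v = G.src x := by
  by_cases h : x ∈ M ∧ G.src x = v
  · simp [split, h]
  · simp [split, h]

lemma getD_split_tgt (hM : ∀ x ∈ M, G.src x = v ∨ G.tgt x = v) (x : E) :
    ((G.split v M).tgt (some x)).getD v = G.tgt x := by
  by_cases h : x ∈ M ∧ G.src x ≠ v
  · have := (hM x h.1).resolve_left h.2
    simp [split, h, this]
  · simp only [split, Option.elim_some, if_neg h, Option.getD_some]

variable [Fintype E]

lemma IsFlow.split_injective {Γ : Type} [AddCommGroup Γ] {φ ψ : Option E → Γ}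
    (hφ : (G.split v M).IsFlow φ) (hψ : (G.split v M).IsFlow ψ)
    (h : ∀ x : E, φ (some x) = ψ (some x)) : φ = ψ := by
  have h1 : (φ + -ψ) none = 0 := by
    refine (hφ.add hψ.neg).eq_zero_of_bridge (X := {none}) ?_ ?_
    · simp [split_src_none, split_tgt_none]
    · rintro (_ | y) hy hne
      · exact absurd rfl hy
      · exact absurd (by simp [h]) hne
  funext x
  cases x with
  | none => simpa [add_neg_eq_zero] using h1
  | some x => exact h x

variable [Fintype V]

lemma IsFlow.unsplit {Γ : Type} [AddCommGroup Γ] (hM : ∀ x ∈ M, G.src x = v ∨ G.tgt x = v)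
    {φ : Option E → Γ} (hφ : (G.split v M).IsFlow φ) : G.IsFlow fun x => φ (some x) := by
  have key : ∀ (h : Option E → Option V) (u : V),
      ∑ w ∈ Finset.univ.filter (fun w : Option V => w.getD v = u),
        (∑ e, if h e = w then φ e else 0) =
      (if (h none).getD v = u then φ none else 0) +
        ∑ x, if (h (some x)).getD v = u then φ (some x) else 0 := by
    intro h u
    rw [Finset.sum_comm, Fintype.sum_option]
    congr 1
    · rw [Finset.sum_ite_eq]; simp
    · exact Finset.sum_congr rfl fun x _ => by rw [Finset.sum_ite_eq]; simp
  intro u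
  have h1 := key (G.split v M).src u
  have h2 := key (G.split v M).tgt u
  have h0 : (∑ w ∈ Finset.univ.filter (fun w : Option V => w.getD v = u),
        ∑ e, if (G.split v M).src e = w then φ e else 0) =
      ∑ w ∈ Finset.univ.filter (fun w : Option V => w.getD v = u),
        ∑ e, if (G.split v M).tgt e = w then φ e else 0 :=
    Finset.sum_congr rfl fun w _ => by convert hφ w
  rw [h1, h2] at h0
  simp only [split_src_none, split_tgt_none, getD_split_src, getD_split_tgt hM, Option.getD_some,
    Option.getD_none] at h0
  exact add_left_cancel h0

lemma card_flows_split_le (hM : ∀ x ∈ M, G.src x = v ∨ G.tgt x = v) (f : E → ZMod 6) :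
    Nat.card {φ : Option E → ZMod 6 // (G.split v M).IsFlow φ ∧ ∀ e, φ e ≠ e.elim 0 f} ≤
      Nat.card {φ : E → ZMod 6 // G.IsFlow φ ∧ ∀ e : E, φ e ≠ f e} := by
  refine Nat.card_le_card_of_injective
    (fun φ => ⟨fun x => φ.1 (some x), φ.2.1.unsplit hM, fun x => φ.2.2 (some x)⟩) ?_
  intro φ ψ h
  exact Subtype.ext (φ.2.1.split_injective ψ.2.1 fun x => congrFun (Subtype.ext_iff.1 h) x)

/-- The edges with exactly one end in `A`. -/
noncomputable def boundary {V E : Type} [Fintype E] (G : Multigraph V E) (A : Finset V) :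
    Finset E :=
  Finset.univ.filter fun x => ¬ (G.src x ∈ A ↔ G.tgt x ∈ A)

lemma mem_boundary {V E : Type} [Fintype E] {G : Multigraph V E} {A : Finset V} {x : E} :
    x ∈ G.boundary A ↔ ¬ (G.src x ∈ A ↔ G.tgt x ∈ A) := by
  simp [boundary]

lemma card_boundary (A : Finset V) : (G.boundary A).card = G.cnt A Aᶜ := by
  rw [cnt_eq_card disjoint_compl_right]
  congr 1
  ext x
  simp only [mem_boundary, Finset.mem_filter, Finset.mem_univ, true_and, Btw, Finset.mem_compl]
  tauto

lemma ThreeCut.split_of_none_mem (hG : G.ThreeCut) {x y : E} (hxy : x ≠ y)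
    (hx : G.src x = v ∨ G.tgt x = v) (hy : G.src y = v ∨ G.tgt y = v)
    (htight : ∀ A : Finset V, v ∉ A → G.otherEnd v x ∈ A → G.otherEnd v y ∈ A →
      G.cnt A Aᶜ ≠ 3) {A' : Finset (Option V)} (hn : none ∈ A') (hv : some v ∉ A') :
    3 ≤ ((G.split v {x, y}).boundary A').card := by
  set A := A'.eraseNone with hA
  have hmem : ∀ u, u ∈ A ↔ some u ∈ A' := fun u => by simp [hA]
  have hvA : v ∉ A := by rwa [hmem]
  set M : Finset E := {x, y} with hM
  have hMv : ∀ e ∈ M, G.src e = v ∨ G.tgt e = v := by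
    intro e he
    rw [hM, Finset.mem_insert, Finset.mem_singleton] at he
    rcases he with rfl | rfl <;> assumption
  set δ := G.boundary A with hδ
  have hδM : ∀ e ∈ M, e ∈ δ → G.otherEnd v e ∈ A := by
    intro e he hd
    have hd := mem_boundary.1 hd
    unfold otherEnd
    rcases hMv e he with h | h
    · rw [if_pos h]; rw [h] at hd; tauto
    · rw [h] at hd
      have h' : G.src e ∈ A := by tauto
      have hne : G.src e ≠ v := fun h'' => hvA (h'' ▸ h')
      rwa [if_neg hne]
  set T := (δ \ M) ∪ M.filter fun e => G.otherEnd v e ∉ A with hT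
  have hsub : Finset.insertNone T ⊆ (G.split v M).boundary A' := by
    intro e he
    rw [mem_boundary]
    cases e with
    | none => rw [split_src_none, split_tgt_none]; tauto
    | some e =>
      rcases Finset.mem_union.1 (Finset.some_mem_insertNone.1 he) with he | he
      · rw [Finset.mem_sdiff] at he
        rw [(split_of_notMem he.2).1, (split_of_notMem he.2).2, ← hmem, ← hmem]
        exact mem_boundary.1 he.1
      · rw [Finset.mem_filter] at he
        have h2 := he.2
        rw [hmem] at h2
        rcases split_of_mem (G := G) (v := v) he.1 with h | h <;> rw [h.1, h.2] <;> tauto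
  have hcard := Finset.card_le_card hsub
  rw [Finset.card_insertNone] at hcard
  refine le_trans ?_ hcard
  have hTcard : T.card = (δ \ M).card + (M.filter fun e => G.otherEnd v e ∉ A).card := by
    refine Finset.card_union_of_disjoint ?_
    exact Finset.disjoint_sdiff.symm.mono_right (Finset.filter_subset _ _)
  have hM2 : M.card = 2 := Finset.card_pair hxy
  by_cases hne : A.Nonempty
  · have h3 := hG A hne (fun h => hvA (h ▸ Finset.mem_univ v))
    have hdc : G.cnt A Aᶜ = δ.card := (card_boundary A).symm
    have hsd := Finset.card_sdiff_add_card_inter δ M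
    have hinter : (δ ∩ M).card ≤ (M.filter fun e => G.otherEnd v e ∈ A).card := by
      refine Finset.card_le_card fun e he => ?_
      rw [Finset.mem_inter] at he
      exact Finset.mem_filter.2 ⟨he.2, hδM e he.2 he.1⟩
    have hspl := Finset.card_filter_add_card_filter_not (s := M) (fun e => G.otherEnd v e ∈ A)
    by_cases hboth : G.otherEnd v x ∈ A ∧ G.otherEnd v y ∈ A
    · have := htight A hvA hboth.1 hboth.2
      omega
    · have : 0 < (M.filter fun e => G.otherEnd v e ∉ A).card := by
        rw [Finset.card_pos]
        by_cases h : G.otherEnd v x ∈ A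
        · exact ⟨y, Finset.mem_filter.2 ⟨by simp [hM], fun h' => hboth ⟨h, h'⟩⟩⟩
        · exact ⟨x, Finset.mem_filter.2 ⟨by simp [hM], h⟩⟩
      omega
  · rw [Finset.not_nonempty_iff_eq_empty] at hne
    have : M.filter (fun e => G.otherEnd v e ∉ A) = M := by
      rw [Finset.filter_eq_self]; simp [hne]
    rw [this] at hTcard
    omega

lemma ThreeCut.split (hG : G.ThreeCut) {x y : E} (hxy : x ≠ y)
    (hx : G.src x = v ∨ G.tgt x = v) (hy : G.src y = v ∨ G.tgt y = v)
    (htight : ∀ A : Finset V, v ∉ A → G.otherEnd v x ∈ A → G.otherEnd v y ∈ A →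
      G.cnt A Aᶜ ≠ 3) : (G.split v {x, y}).ThreeCut := by
  intro A' hne hnu
  rw [← card_boundary]
  by_cases hnv : none ∈ A' ↔ some v ∈ A'
  · have hMv : ∀ e ∈ ({x, y} : Finset E), G.src e = v ∨ G.tgt e = v := by
      intro e he
      rw [Finset.mem_insert, Finset.mem_singleton] at he
      rcases he with rfl | rfl <;> assumption
    have hget : ∀ w : Option V, w ∈ A' ↔ w.getD v ∈ A'.eraseNone := by
      rintro (_ | w) <;> simp [hnv]
    have h3 := hG A'.eraseNone (by
      obtain ⟨w, hw⟩ := hne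
      exact ⟨_, (hget w).1 hw⟩) (by
      intro h
      exact hnu (Finset.eq_univ_iff_forall.2 fun w => (hget w).2 (h ▸ Finset.mem_univ _)))
    rw [← card_boundary] at h3
    refine h3.trans (Finset.card_le_card_of_injOn some ?_ (Option.some_injective E).injOn)
    intro e he
    rw [Finset.mem_coe, mem_boundary] at he ⊢
    rwa [hget, hget, getD_split_src, getD_split_tgt hMv]
  · by_cases hn : none ∈ A'
    · exact hG.split_of_none_mem hxy hx hy htight hn (by tauto)
    · have hc := hG.split_of_none_mem hxy hx hy htight (A' := A'ᶜ) (by simpa using hn)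
        (by rw [Finset.mem_compl]; tauto)
      refine hc.trans (Finset.card_le_card fun e he => ?_)
      rw [mem_boundary] at he ⊢
      simp only [Finset.mem_compl] at he
      tauto

lemma cnt_submodular (A B : Finset V) :
    G.cnt (A ∪ B) (A ∪ B)ᶜ + G.cnt (A ∩ B) (A ∩ B)ᶜ ≤ G.cnt A Aᶜ + G.cnt B Bᶜ := by
  unfold cnt
  rw [← Finset.sum_add_distrib, ← Finset.sum_add_distrib]
  refine Finset.sum_le_sum fun x _ => ?_
  by_cases h1 : G.src x ∈ A <;> by_cases h2 : G.src x ∈ B <;> by_cases h3 : G.tgt x ∈ A <;>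
    by_cases h4 : G.tgt x ∈ B <;> simp [h1, h2, h3, h4]

/-- At a vertex of degree at least four some pair of edges can be split off. -/
lemma ThreeCut.exists_pair (hG : G.ThreeCut) (h4 : 4 ≤ G.cnt {v} Finset.univ) :
    ∃ x y, x ≠ y ∧ (G.src x = v ∨ G.tgt x = v) ∧ (G.src y = v ∨ G.tgt y = v) ∧
      ∀ A : Finset V, v ∉ A → G.otherEnd v x ∈ A → G.otherEnd v y ∈ A → G.cnt A Aᶜ ≠ 3 := by
  by_cases hloop : ∃ x, G.src x = v ∧ G.tgt x = v
  · obtain ⟨x, hs, ht⟩ := hloop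
    obtain ⟨y, hyx, hy⟩ : ∃ y, y ≠ x ∧ (G.src y = v ∨ G.tgt y = v) := by
      by_contra! hn
      have : G.cnt {v} Finset.univ = 2 := by
        unfold cnt
        rw [Finset.sum_eq_single x]
        · simp [hs, ht]
        · intro y _ hy
          simp [hn y hy]
        · simp
      omega
    refine ⟨x, y, hyx.symm, Or.inl hs, hy, fun A hv hx => absurd ?_ hv⟩
    rwa [otherEnd, if_pos hs, ht] at hx
  push Not at hloop
  have h0 : G.cnt {v} {v} = 0 := by
    by_contra h
    obtain ⟨x, hx⟩ := cnt_pos.1 (Nat.pos_of_ne_zero h)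
    unfold Btw at hx
    simp only [Finset.mem_singleton, or_self] at hx
    exact hloop x hx.1 hx.2
  rw [cnt_sdiff_right (Finset.subset_univ {v}), ← Finset.compl_eq_univ_sdiff, h0, zero_add] at h4
  have hother : ∀ (x : E) (A : Finset V), v ∉ A → G.Btw x {v} {v}ᶜ → G.otherEnd v x ∈ A →
      G.Btw x {v} A := by
    intro x A hv hx hA
    unfold Btw at hx ⊢
    unfold otherEnd at hA
    simp only [Finset.mem_compl, Finset.mem_singleton] at hx ⊢
    rcases hx with h | h
    · rw [if_pos h.1] at hA; exact Or.inl ⟨h.1, hA⟩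
    · rw [if_neg h.1] at hA; exact Or.inr ⟨hA, h.2⟩
  have hinc : ∀ x, G.Btw x {v} {v}ᶜ → G.src x = v ∨ G.tgt x = v := by
    intro x hx
    unfold Btw at hx
    simp only [Finset.mem_compl, Finset.mem_singleton] at hx
    tauto
  have hcard := cnt_eq_card (G := G) (X := {v}) (Y := {v}ᶜ) disjoint_compl_right
  set R := Finset.univ.filter fun x => G.Btw x {v} {v}ᶜ with hR
  obtain ⟨x, hx⟩ : R.Nonempty := by rw [← Finset.card_pos]; omega
  have hx' := (Finset.mem_filter.1 hx).2
  set F := Finset.univ.filter fun A : Finset V => v ∉ A ∧ G.otherEnd v x ∈ A ∧ G.cnt A Aᶜ = 3 with hF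
  by_cases hFne : F.Nonempty
  · obtain ⟨A, hA, hmax⟩ := Finset.exists_max_image F Finset.card hFne
    simp only [hF, Finset.mem_filter, Finset.mem_univ, true_and] at hA hmax
    obtain ⟨hvA, hxA, hA3⟩ := hA
    have hdis : Disjoint ({v} : Finset V) A := by simpa using hvA
    obtain ⟨y, hy, hyA⟩ : ∃ y ∈ R, G.otherEnd v y ∉ A := by
      by_contra! hn
      have h1 : R.card ≤ (Finset.univ.filter fun x => G.Btw x {v} A).card :=
        Finset.card_le_card fun y hy => Finset.mem_filter.2
          ⟨Finset.mem_univ _, hother y A hvA (Finset.mem_filter.1 hy).2 (hn y hy)⟩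
      rw [← cnt_eq_card hdis, cnt_comm] at h1
      have h2 := cnt_mono (G := G) (subset_refl A) (B := {v}) (B' := Aᶜ) (by simpa using hvA)
      omega
    refine ⟨x, y, ?_, hinc x hx', hinc y (Finset.mem_filter.1 hy).2, ?_⟩
    · rintro rfl; exact hyA hxA
    · intro B hvB hxB hyB hB3
      have hsub := cnt_submodular (G := G) A B
      have hvAB : v ∉ A ∪ B := by simp [hvA, hvB]
      have h1 := hG (A ∪ B) ⟨_, Finset.mem_union_left _ hxA⟩
        (fun h => hvAB (h ▸ Finset.mem_univ v))
      have h2 := hG (A ∩ B) ⟨_, Finset.mem_inter.2 ⟨hxA, hxB⟩⟩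
        (fun h => hvA (Finset.mem_inter.1 (h.symm ▸ Finset.mem_univ v : v ∈ A ∩ B)).1)
      have h3 := hmax (A ∪ B) ⟨hvAB, Finset.mem_union_left _ hxA, by omega⟩
      have h4 : A.card < (A ∪ B).card := Finset.card_lt_card
        ⟨Finset.subset_union_left, fun h => hyA (h (Finset.mem_union_right _ hyB))⟩
      omega
  · obtain ⟨y, hy, hyx⟩ := Finset.exists_mem_ne (show 1 < R.card by omega) x
    refine ⟨x, y, hyx.symm, hinc x hx', hinc y (Finset.mem_filter.1 hy).2, ?_⟩
    intro A hv hxA _ h3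
    exact hFne ⟨A, Finset.mem_filter.2 ⟨Finset.mem_univ _, hv, hxA, h3⟩⟩

lemma cnt_univ_univ : G.cnt Finset.univ Finset.univ = 2 * Fintype.card E := by
  have h2 : G.inside Finset.univ = Finset.univ := by ext x; simp
  rw [cnt_self_eq, h2, Finset.card_univ]

lemma ThreeCut.three_le_degree (hG : G.ThreeCut) (h2 : 2 ≤ Fintype.card V) (v : V) :
    3 ≤ G.cnt {v} Finset.univ := by
  refine (hG {v} (by simp) fun h => ?_).trans (cnt_mono subset_rfl (Finset.subset_univ _))
  have := congrArg Finset.card h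
  rw [Finset.card_singleton, Finset.card_univ] at this
  omega

theorem ThreeCut.le_card_flows {ℓ : ℕ} (hℓ : 11 ≤ ℓ) (n : ℕ) : ∀ {V E : Type} [Fintype V]
    [Fintype E] {G : Multigraph V E}, G.ThreeCut → Fintype.card E = Fintype.card V + ℓ →
    2 * Fintype.card E = 3 * Fintype.card V + n → ∀ f : E → ZMod 6,
    (2 : ℝ) ^ (Real.sqrt ℓ / Real.logb 2 ℓ) ≤
      Nat.card {φ : E → ZMod 6 // G.IsFlow φ ∧ ∀ e : E, φ e ≠ f e} := by
  induction n with
  | zero =>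
    intro V E _ _ G hG hE h2 f
    have hV : 2 ≤ Fintype.card V := by omega
    have hsum := cnt_univ_univ (G := G)
    rw [cnt_eq_sum] at hsum
    have hcubic : G.CubicThreeConn := by
      refine ⟨fun v => ?_, hG, hV⟩
      have h1 := Finset.add_sum_erase Finset.univ (fun v => G.cnt {v} Finset.univ)
        (Finset.mem_univ v)
      have h3 := Finset.card_nsmul_le_sum (Finset.univ.erase v)
        (fun v => G.cnt {v} Finset.univ) 3 fun u _ => hG.three_le_degree hV u
      have h4 := Finset.card_erase_add_one (Finset.mem_univ v)
      have h5 := hG.three_le_degree hV v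
      rw [Finset.card_univ] at h4
      simp only [smul_eq_mul] at h3
      omega
    exact (hcubic.le_card_flowPairs hℓ hE _ _).trans (by exact_mod_cast card_flowPairs_le f)
  | succ n ih =>
    intro V E _ _ G hG hE h2 f
    obtain ⟨v, hv⟩ : ∃ v, 4 ≤ G.cnt {v} Finset.univ := by
      by_contra! hn
      have hsum := cnt_univ_univ (G := G)
      rw [cnt_eq_sum] at hsum
      have := Finset.sum_le_card_nsmul Finset.univ (fun v => G.cnt {v} Finset.univ) 3
        fun u _ => Nat.le_of_lt_succ (hn u)
      rw [Finset.card_univ, smul_eq_mul] at this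
      omega
    obtain ⟨x, y, hxy, hx, hy, ht⟩ := hG.exists_pair hv
    have h3 := ih (hG.split hxy hx hy ht) (by simp only [Fintype.card_option]; omega)
      (by simp only [Fintype.card_option]; omega) (fun e => e.elim 0 f)
    refine h3.trans ?_
    have hMv : ∀ e ∈ ({x, y} : Finset E), G.src e = v ∨ G.tgt e = v := by
      intro e he
      rw [Finset.mem_insert, Finset.mem_singleton] at he
      rcases he with rfl | rfl <;> assumption
    exact_mod_cast card_flows_split_le hMv f

lemma EdgeConnected.threeCut (hG : G.EdgeConnected 3) : G.ThreeCut := by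
  intro A hne hnu
  by_contra hlt
  rw [← card_boundary] at hlt
  obtain ⟨u, hu⟩ := hne
  obtain ⟨w, hw⟩ : ∃ w, w ∉ A := by
    by_contra! h; exact hnu (Finset.eq_univ_iff_forall.2 h)
  have hc := hG (G.boundary A) (by rw [Set.ncard_coe_finset]; omega)
  have hr := hc.2 u w
  refine hw ?_
  unfold Reaches at hr
  induction hr with
  | refl => exact hu
  | tail _ hadj ih =>
    obtain ⟨e, he, h⟩ := hadj
    rw [Finset.mem_coe, mem_boundary, not_not] at he
    rcases h with ⟨h1, h2⟩ | ⟨h1, h2⟩ <;> rw [h1, h2] at he <;> tauto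

lemma ThreeCut.three_mul_card_le (hG : G.ThreeCut) {ℓ : ℕ} (hℓ : 11 ≤ ℓ)
    (hE : Fintype.card E = Fintype.card V + ℓ) : 3 * Fintype.card V ≤ 2 * Fintype.card E := by
  by_cases hV : 2 ≤ Fintype.card V
  · have h3 := Finset.card_nsmul_le_sum Finset.univ
      (fun v => G.cnt {v} Finset.univ) 3 fun u _ => hG.three_le_degree hV u
    rw [← cnt_eq_sum, cnt_univ_univ, Finset.card_univ, smul_eq_mul] at h3
    omega
  · omega

end Reduction

end Multigraph

/-- For an oriented 3-edge-connected graph with `ℓ = |E| - |V| ≥ 11` and any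
`f : E → ℤ₆`, there are at least `2^(√ℓ / log₂ ℓ)` flows `φ` with `φ(e) ≠ f(e)`
for every edge `e`. -/
theorem many_Z6_group_connectivity_flows {V E : Type} [Fintype V] [Fintype E]
    (G : Multigraph V E) (hG : G.EdgeConnected 3)
    (ℓ : ℕ) (hℓ : (ℓ : ℤ) = (Fintype.card E : ℤ) - (Fintype.card V : ℤ)) (hℓ11 : 11 ≤ ℓ)
    (f : E → ZMod 6) :
    (2 : ℝ) ^ (Real.sqrt ℓ / Real.logb 2 ℓ) ≤
      Nat.card {φ : E → ZMod 6 // G.IsFlow φ ∧ ∀ e : E, φ e ≠ f e} := by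
  have hE : Fintype.card E = Fintype.card V + ℓ := by omega
  obtain ⟨n, hn⟩ := Nat.exists_eq_add_of_le (hG.threeCut.three_mul_card_le hℓ11 hE)
  exact hG.threeCut.le_card_flows hℓ11 n hE hn f
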